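/- arXiv:1307.0237 — 7 statements merged into one kernel-verified Lean document; each statement's English description precedes it below -/
import Mathlib

section
/- Simplicity of the eigenvalue: let A : X → ℝ be a normalized continuous potential, V : X → ℝ continuous and λ ∈ ℝ. Suppose F, G ∈ C(X,ℝ) satisfy F(x) > 0 for all x ∈ X, (𝓛_A − I + M_V)F = λ·F and (𝓛_A − I + M_V)G = λ·G. Then there exists c ∈ ℝ with G = c·F. -/
/-!
Let `c = min (G / F)`, attained at some `x₀` by compactness, and put `H = G - c F`. Then `H ≥ 0`,
`H x₀ = 0`, and `H` satisfies the same eigenvalue equation as `F` and `G`. At a zero `x` of `H` the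
equation reads `∑ a, e^{A(ax)} H(ax) = 0`; all terms are nonnegative, so `H` vanishes at every
preimage `ax`. The zero set of `H` thus contains the backward orbit of `x₀` under the shift, which
is dense (`tendsto_splice`), and it is closed, so `H = 0`.
-/

open MeasureTheory Filter

noncomputable section

/-- The concatenation `a·x`: `(ax)(0) = a`, `(ax)(n+1) = x n`. -/
def cons {d : ℕ} (a : Fin d) (x : ℕ → Fin d) : ℕ → Fin d
  | 0 => a
  | n + 1 => x n

/-- The shift map `σ` on the Bernoulli space. -/
def shift {d : ℕ} (x : ℕ → Fin d) : ℕ → Fin d := fun n => x (n + 1)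

open Classical in
/-- The metric `d_θ` on the Bernoulli space: `d_θ(x,y) = θ^{min{n : x n ≠ y n}}` for `x ≠ y`. -/
def distTheta {d : ℕ} (θ : ℝ) (x y : ℕ → Fin d) : ℝ :=
  if x = y then 0 else θ ^ sInf {n : ℕ | x n ≠ y n}

/-- The Ruelle operator with potential `B`, applied pointwise:
`(𝓛_B g)(x) = Σ_{a} e^{B(ax)} g(ax)`. -/
def ruelleSum {d : ℕ} (B : (ℕ → Fin d) → ℝ) (g : (ℕ → Fin d) → ℝ) (x : ℕ → Fin d) : ℝ :=
  ∑ a : Fin d, Real.exp (B (cons a x)) * g (cons a x)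

/-- The exponential `e^B` of a bounded operator `B` on `C(X,ℝ)`, applied to `f`:
`e^B f = Σ_{n=0}^∞ (1/n!) Bⁿ f`. -/
def opExp {X : Type*} [TopologicalSpace X] [CompactSpace X]
    (B : C(X, ℝ) →L[ℝ] C(X, ℝ)) (f : C(X, ℝ)) : C(X, ℝ) :=
  ∑' n : ℕ, ((Nat.factorial n : ℝ)⁻¹ • (B ^ n) f)

/-- The sequence made of the first `n` letters of `x` followed by `y`; it is an `n`-th preimage of
`y` under the shift. -/
def splice {d : ℕ} (n : ℕ) (x y : ℕ → Fin d) : ℕ → Fin d :=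
  fun k => if k < n then x k else y (k - n)

lemma splice_zero {d : ℕ} (x y : ℕ → Fin d) : splice 0 x y = y := by
  funext k
  simp [splice]

lemma splice_succ {d : ℕ} (n : ℕ) (x y : ℕ → Fin d) :
    splice (n + 1) x y = cons (x 0) (splice n (shift x) y) := by
  funext k
  cases k <;> simp [splice, cons, shift]

lemma tendsto_splice {d : ℕ} (x y : ℕ → Fin d) :
    Tendsto (fun n => splice n x y) atTop (nhds x) := by
  refine tendsto_pi_nhds.2 fun k => tendsto_const_nhds.congr' ?_
  filter_upwards [eventually_gt_atTop k] with n hn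
  simp [splice, hn]

/-- A closed set that contains `y` and is stable under all inverse branches `x ↦ ax` of the shift
is the whole space. -/
lemma eq_univ_of_isClosed_of_cons_mem {d : ℕ} {Z : Set (ℕ → Fin d)} (hZ : IsClosed Z)
    {y : ℕ → Fin d} (hy : y ∈ Z) (hcons : ∀ x ∈ Z, ∀ a, cons a x ∈ Z) : Z = Set.univ := by
  have key : ∀ n x, splice n x y ∈ Z := by
    intro n
    induction n with
    | zero => intro x; rwa [splice_zero]
    | succ n ih => intro x; rw [splice_succ]; exact hcons _ (ih _) _
  exact Set.eq_univ_of_forall fun x =>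
    hZ.mem_of_tendsto (tendsto_splice x y) (Eventually.of_forall fun n => key n x)

/-- **Simplicity of the eigenvalue.** -/
theorem stmt_1 (d : ℕ) (hd : 2 ≤ d)
    (A V : (ℕ → Fin d) → ℝ) (hA : Continuous A) (hV : Continuous V)
    (hAnorm : ∀ x, ∑ a : Fin d, Real.exp (A (cons a x)) = 1)
    (lam : ℝ) (F G : C((ℕ → Fin d), ℝ))
    (hF : ∀ x, 0 < F x)
    (hFeig : ∀ x, ruelleSum A F x - F x + V x * F x = lam * F x)
    (hGeig : ∀ x, ruelleSum A G x - G x + V x * G x = lam * G x) :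
    ∃ c : ℝ, G = c • F := by
  have hne : Nonempty (ℕ → Fin d) := ⟨fun _ => ⟨0, by omega⟩⟩
  obtain ⟨x₀, -, hx₀⟩ := isCompact_univ.exists_isMinOn (Set.univ_nonempty (α := ℕ → Fin d))
    (f := fun x => G x / F x)
    (G.continuous.div F.continuous fun x => (hF x).ne').continuousOn
  set c : ℝ := G x₀ / F x₀ with hc
  have hnonneg : ∀ x, 0 ≤ G x - c * F x := by
    intro x
    have h : c ≤ G x / F x := hx₀ (Set.mem_univ x)
    rw [le_div_iff₀ (hF x)] at h
    linarith
  have hzero : G x₀ - c * F x₀ = 0 := by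
    rw [hc, div_mul_cancel₀ _ (hF x₀).ne', sub_self]
  have hclosed : IsClosed {x | G x - c * F x = 0} :=
    isClosed_eq (by fun_prop) continuous_const
  have hcons : ∀ x ∈ {x | G x - c * F x = 0}, ∀ a,
      cons a x ∈ {x | G x - c * F x = 0} := by
    intro x hx a
    have hx' : G x - c * F x = 0 := hx
    have hsum : ∑ a : Fin d, Real.exp (A (cons a x)) * (G (cons a x) - c * F (cons a x)) = 0 := by
      have hlin : ∑ a : Fin d, Real.exp (A (cons a x)) * (G (cons a x) - c * F (cons a x))
          = ruelleSum A G x - c * ruelleSum A F x := by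
        simp only [ruelleSum, Finset.mul_sum, ← Finset.sum_sub_distrib]
        exact Finset.sum_congr rfl fun a _ => by ring
      rw [hlin]
      linear_combination hGeig x - c * hFeig x + (lam + 1 - V x) * hx'
    have hterm := (Finset.sum_eq_zero_iff_of_nonneg fun b _ =>
      mul_nonneg (Real.exp_pos _).le (hnonneg (cons b x))).1 hsum a (Finset.mem_univ a)
    exact (mul_eq_zero.1 hterm).resolve_left (Real.exp_pos _).ne'
  have huniv := eq_univ_of_isClosed_of_cons_mem hclosed hzero hcons
  refine ⟨c, ContinuousMap.ext fun x => ?_⟩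
  have hx : x ∈ {x | G x - c * F x = 0} := huniv ▸ Set.mem_univ x
  simpa using sub_eq_zero.1 hx
end
end

section
/- Existence of an eigenprobability: let θ ∈ (0,1), let A : X → ℝ be a normalized Lipschitz potential and V : X → ℝ Lipschitz. Then there exists a Borel probability measure ν on X such that, setting λ := ∫ V dν, one has ∫ (𝓛_A f − f + V·f) dν = λ·∫ f dν for every f ∈ C(X,ℝ), and moreover ∫ e^{T(𝓛_A − I + M_V)}(f) dν = e^{λT}·∫ f dν for every f ∈ C(X,ℝ) and every T ≥ 0. -/
/-!
The generator `B = 𝓛_A - I + M_V` satisfies the positive minimum principle: if `g ≥ 0` vanishes at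
`x₀`, then `(B g)(x₀) = (𝓛_A g)(x₀) ≥ 0`. This alone yields, on any compact space, a positive
eigenfunctional of the adjoint, without a fixed point theorem.

Let `r` be the infimum of the `c` for which some strictly positive continuous `u` satisfies
`B u ≤ c u` (a Collatz–Wielandt number). The range of `r - B` contains no strictly positive
function. Indeed, suppose `r f - B f > 0`. For `c` slightly above `r`, still `c f - B f > 0`, and
some `u > 0` has `B u ≤ c u`. If the minimum `m` of `f / u`, attained at `x₀`, were `≤ 0`, the
minimum principle for `f - m u` would give `B f (x₀) ≥ m B u (x₀) ≥ c f (x₀)`, a contradiction.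
Hence `f > 0`, and then `B f ≤ (r - ε) f` for some `ε > 0`, against the choice of `r`.

By Hahn–Banach there is a functional vanishing on the range of `r - B` and positive on strictly
positive functions; normalized, it is integration against a probability measure `ν` by
Riesz–Markov–Kakutani. Thus `∫ B f dν = r ∫ f dν`; taking `f = 1` and using `B 1 = V` identifies
`r = ∫ V dν`, and summing the exponential series gives the statement about the semigroup.
-/

open MeasureTheory Filter

noncomputable section

section Eigenfunctional

variable {X : Type*} [TopologicalSpace X] [CompactSpace X]

/-- The positive minimum principle for an operator on `C(X, ℝ)`. -/
def PosMinPrinciple (B : C(X, ℝ) →L[ℝ] C(X, ℝ)) : Prop :=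
  ∀ (g : C(X, ℝ)) (x₀ : X), (∀ x, 0 ≤ g x) → g x₀ = 0 → 0 ≤ B g x₀

/-- The numbers `c` admitting a strictly positive `u` with `B u ≤ c u`. -/
def superRates (B : C(X, ℝ) →L[ℝ] C(X, ℝ)) : Set ℝ :=
  {c | ∃ u : C(X, ℝ), (∀ x, 0 < u x) ∧ ∀ x, B u x ≤ c * u x}

/-- Riesz–Markov–Kakutani for normalized positive functionals on `C(X, ℝ)`. -/
lemma exists_probabilityMeasure [T2Space X] [MeasurableSpace X] [BorelSpace X]
    (ψ : C(X, ℝ) →L[ℝ] ℝ) (hpos : ∀ f, (∀ x, 0 ≤ f x) → 0 ≤ ψ f) (h1 : ψ 1 = 1) :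
    ∃ ν : Measure X, IsProbabilityMeasure ν ∧ ∀ f : C(X, ℝ), ∫ x, f x ∂ν = ψ f := by
  let L : CompactlySupportedContinuousMap X ℝ →ₗ[ℝ] ℝ :=
    { toFun := fun f => ψ f.toContinuousMap
      map_add' := fun f g => ψ.map_add f.toContinuousMap g.toContinuousMap
      map_smul' := fun c f => ψ.map_smul c f.toContinuousMap }
  let Λ := PositiveLinearMap.mk₀ L fun f hf => hpos _ hf
  have hint : ∀ f : C(X, ℝ), ∫ x, f x ∂(RealRMK.rieszMeasure Λ) = ψ f := fun f =>
    RealRMK.integral_rieszMeasure Λ (CompactlySupportedContinuousMap.continuousMapEquiv f)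
  refine ⟨RealRMK.rieszMeasure Λ, ⟨?_⟩, hint⟩
  have := hint 1
  rw [h1] at this
  simpa [measureReal_def, ENNReal.toReal_eq_one_iff] using this

lemma eigenfunctional_opExp {B : C(X, ℝ) →L[ℝ] C(X, ℝ)} {ψ : C(X, ℝ) →L[ℝ] ℝ} {r : ℝ}
    (h : ∀ f, ψ (B f) = r * ψ f) (f : C(X, ℝ)) : ψ (opExp B f) = Real.exp r * ψ f := by
  have hpow : ∀ n : ℕ, ψ ((B ^ n) f) = r ^ n * ψ f := by
    intro n
    induction n with
    | zero => simp
    | succ n ih => rw [pow_succ', mul_apply_eq_comp, h, ih, pow_succ']; ring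
  have hsum : Summable fun n : ℕ => ((Nat.factorial n : ℝ)⁻¹ • (B ^ n) f) := by
    have := (NormedSpace.expSeries_summable' (𝕂 := ℝ) B).mapL
      (ContinuousLinearMap.apply ℝ C(X, ℝ) f)
    simpa using this
  rw [opExp, ψ.map_tsum hsum, Real.exp_eq_exp_ℝ, NormedSpace.exp_eq_tsum ℝ, ← tsum_mul_right]
  congr 1
  ext n
  rw [map_smul, hpow, smul_eq_mul, smul_eq_mul, mul_assoc]

variable [Nonempty X]

lemma exists_forall_ge (f : C(X, ℝ)) : ∃ x₀, ∀ x, f x₀ ≤ f x := by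
  obtain ⟨x₀, -, h⟩ := isCompact_univ.exists_isMinOn Set.univ_nonempty f.continuous.continuousOn
  exact ⟨x₀, fun x => h (Set.mem_univ x)⟩

lemma superRates_nonempty (B : C(X, ℝ) →L[ℝ] C(X, ℝ)) : (superRates B).Nonempty := by
  obtain ⟨x₀, h⟩ := exists_forall_ge (-(B 1))
  refine ⟨B 1 x₀, 1, fun x => by simp, fun x => ?_⟩
  have := h x
  simp at this ⊢
  linarith

/-- Evaluating `B u ≤ c u` at a minimum of `u` bounds `c` below by the minimum of `B 1`. -/
lemma superRates_bddBelow {B : C(X, ℝ) →L[ℝ] C(X, ℝ)} (hB : PosMinPrinciple B) :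
    BddBelow (superRates B) := by
  obtain ⟨y, hy⟩ := exists_forall_ge (B 1)
  refine ⟨B 1 y, ?_⟩
  rintro c ⟨u, hu, hc⟩
  obtain ⟨x₀, h⟩ := exists_forall_ge u
  have h1 := hB (u - u x₀ • 1) x₀ (fun x => by simpa using h x) (by simp)
  simp only [map_sub, map_smul, ContinuousMap.sub_apply, ContinuousMap.smul_apply,
    smul_eq_mul] at h1
  have h2 := hc x₀
  have h3 := hu x₀
  have h4 := hy x₀
  have h5 : u x₀ * B 1 x₀ ≤ u x₀ * c := by linarith
  exact h4.trans (le_of_mul_le_mul_left h5 h3)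

/-- Comparison with a strictly positive `u` satisfying `B u ≤ c u`. -/
lemma pos_of_lt {B : C(X, ℝ) →L[ℝ] C(X, ℝ)} (hB : PosMinPrinciple B) {c : ℝ}
    (hc : c ∈ superRates B) {f : C(X, ℝ)} (hf : ∀ x, B f x < c * f x) : ∀ x, 0 < f x := by
  obtain ⟨u, hu, hcu⟩ := hc
  let q : C(X, ℝ) := ⟨fun x => f x / u x, f.continuous.div u.continuous fun x => (hu x).ne'⟩
  obtain ⟨x₀, hq⟩ := exists_forall_ge q
  have hq' : ∀ x, f x₀ / u x₀ ≤ f x / u x := hq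
  set m := f x₀ / u x₀ with hm
  have hfx : f x₀ = m * u x₀ := by rw [hm, div_mul_cancel₀ _ (hu x₀).ne']
  have hmu : ∀ x, m * u x ≤ f x := fun x => (le_div_iff₀ (hu x)).1 (hq' x)
  have hmpos : 0 < m := by
    by_contra hneg
    have h1 := hB (f - m • u) x₀ (fun x => by simpa using hmu x) (by simp [hfx])
    simp only [map_sub, map_smul, ContinuousMap.sub_apply, ContinuousMap.smul_apply,
      smul_eq_mul] at h1
    have h2 := hf x₀
    rw [hfx] at h2
    have h3 := mul_le_mul_of_nonpos_left (hcu x₀) (not_lt.1 hneg)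
    linarith
  exact fun x => (mul_pos hmpos (hu x)).trans_le (hmu x)

/-- With `r` the infimum of `superRates B`, the range of `r - B` contains no strictly positive
function: otherwise `r - ε` would belong to `superRates B` for a small `ε > 0`. -/
lemma range_disjoint_pos {B : C(X, ℝ) →L[ℝ] C(X, ℝ)} (hB : PosMinPrinciple B) (f : C(X, ℝ)) :
    ¬ ∀ x, 0 < sInf (superRates B) * f x - B f x := by
  intro hf
  set r := sInf (superRates B) with hr
  obtain ⟨x₀, h⟩ := exists_forall_ge (r • f - B f)
  simp only [ContinuousMap.sub_apply, ContinuousMap.smul_apply, smul_eq_mul] at h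
  have hδ := hf x₀
  set δ := r * f x₀ - B f x₀
  -- With `ε = δ / (‖f‖ + 1)`, moving `r` by `ε` changes `r f - B f` by less than its minimum `δ`.
  set K := ‖f‖ + 1 with hK
  have hK0 : 0 < K := by positivity
  have hfK : ∀ x, |f x| < K := fun x => by
    have := f.norm_coe_le_norm x
    rw [Real.norm_eq_abs] at this
    linarith
  set ε := δ / K with hε
  have hε0 : 0 < ε := div_pos hδ hK0
  have hεf : ∀ x, |ε * f x| < δ := fun x => by
    rw [abs_mul, abs_of_pos hε0]
    calc ε * |f x| < ε * K := mul_lt_mul_of_pos_left (hfK x) hε0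
      _ = δ := by rw [hε, div_mul_cancel₀ _ hK0.ne']
  obtain ⟨c, hcS, hc⟩ := exists_lt_of_csInf_lt (superRates_nonempty B)
    (show sInf (superRates B) < r + ε by linarith)
  have hrε : r + ε ∈ superRates B := by
    obtain ⟨u, hu, hcu⟩ := hcS
    exact ⟨u, hu, fun x => (hcu x).trans (mul_le_mul_of_nonneg_right hc.le (hu x).le)⟩
  have hfpos : ∀ x, 0 < f x := pos_of_lt hB hrε fun x => by
    have h1 := h x
    have h2 := (abs_lt.1 (hεf x)).1
    nlinarith
  have hmem : r - ε ∈ superRates B := ⟨f, hfpos, fun x => by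
    have h1 := h x
    have h2 := (abs_lt.1 (hεf x)).2
    nlinarith⟩
  have := csInf_le (superRates_bddBelow hB) hmem
  linarith

lemma exists_eigenfunctional {B : C(X, ℝ) →L[ℝ] C(X, ℝ)} (hB : PosMinPrinciple B) :
    ∃ (r : ℝ) (ψ : C(X, ℝ) →L[ℝ] ℝ), (∀ f, (∀ x, 0 ≤ f x) → 0 ≤ ψ f) ∧ ψ 1 = 1 ∧
      ∀ f, ψ (B f) = r * ψ f := by
  set r := sInf (superRates B)
  let D : C(X, ℝ) →L[ℝ] C(X, ℝ) := r • ContinuousLinearMap.id ℝ C(X, ℝ) - B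
  have hopen : IsOpen {g : C(X, ℝ) | ∀ x, 0 < g x} := by
    have h := ContinuousMap.isOpen_setOfPred_mapsTo (X := X) (Y := ℝ) isCompact_univ
      (isOpen_Ioi (a := (0 : ℝ)))
    convert h using 1
    ext g
    simp [Set.MapsTo]
  have hconv : Convex ℝ {g : C(X, ℝ) | ∀ x, 0 < g x} := by
    intro g hg k hk a b ha hb hab x
    exact (convex_Ioi (0 : ℝ)) (hg x) (hk x) ha hb hab
  obtain ⟨φ, s, h1, h2⟩ := geometric_hahn_banach_open hconv hopen
    (t := (LinearMap.range (D : C(X, ℝ) →ₗ[ℝ] C(X, ℝ)) : Set C(X, ℝ))) (Submodule.convex _) (by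
      rw [Set.disjoint_left]
      rintro g hg ⟨f, rfl⟩
      exact range_disjoint_pos hB f fun x => by simpa [D] using hg x)
  have hs : s ≤ 0 := by simpa using h2 0 (Submodule.zero_mem _)
  -- A functional bounded below on a subspace vanishes there.
  have hφD : ∀ f, φ (D f) = 0 := by
    intro f
    by_contra hne
    have := h2 (D (((s - 1) / φ (D f)) • f)) ⟨_, rfl⟩
    rw [map_smul, map_smul, smul_eq_mul, div_mul_cancel₀ _ hne] at this
    linarith
  have hφ1 : φ 1 < 0 := (h1 1 (fun x => by simp)).trans_le hs
  have hφnonpos : ∀ f : C(X, ℝ), (∀ x, 0 ≤ f x) → φ f ≤ 0 := by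
    intro f hf
    by_contra! hpos
    -- `f + t • 1` is strictly positive, and `t` is chosen so that `φ` vanishes on it.
    have ht : 0 < φ f / (-φ 1) := div_pos hpos (by linarith)
    have := h1 (f + (φ f / (-φ 1)) • 1) (fun x => by
      have := hf x
      simp only [ContinuousMap.add_apply, ContinuousMap.smul_apply, ContinuousMap.one_apply,
        smul_eq_mul, mul_one]
      linarith)
    rw [map_add, map_smul, smul_eq_mul, div_neg, neg_mul, div_mul_cancel₀ _ hφ1.ne] at this
    linarith
  refine ⟨r, (φ 1)⁻¹ • φ, fun f hf => ?_, ?_, fun f => ?_⟩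
  · exact mul_nonneg_of_nonpos_of_nonpos (inv_nonpos.2 hφ1.le) (hφnonpos f hf)
  · simp [hφ1.ne]
  · have := hφD f
    simp only [D, sub_apply, smul_apply,
      ContinuousLinearMap.id_apply, map_sub, map_smul, smul_eq_mul] at this
    simp only [smul_apply, smul_eq_mul]
    linear_combination (-(φ 1)⁻¹) * this

end Eigenfunctional

/-- **Existence of an eigenprobability.** -/
theorem stmt_2 (d : ℕ) (hd : 2 ≤ d) (θ : ℝ) (hθ0 : 0 < θ) (hθ1 : θ < 1)
    (A V : (ℕ → Fin d) → ℝ)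
    (CA : ℝ) (hALip : ∀ x y, |A x - A y| ≤ CA * distTheta θ x y)
    (hAnorm : ∀ x, ∑ a : Fin d, Real.exp (A (cons a x)) = 1)
    (CV : ℝ) (hVLip : ∀ x y, |V x - V y| ≤ CV * distTheta θ x y)
    (LA MV : C((ℕ → Fin d), ℝ) →L[ℝ] C((ℕ → Fin d), ℝ))
    (hLA : ∀ (f : C((ℕ → Fin d), ℝ)) (x), LA f x = ∑ a : Fin d, Real.exp (A (cons a x)) * f (cons a x))
    (hMV : ∀ (f : C((ℕ → Fin d), ℝ)) (x), MV f x = V x * f x) :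
    ∃ ν : Measure (ℕ → Fin d), IsProbabilityMeasure ν ∧
      (∀ f : C((ℕ → Fin d), ℝ),
        ∫ x, (LA f x - f x + V x * f x) ∂ν = (∫ x, V x ∂ν) * ∫ x, f x ∂ν) ∧
      (∀ f : C((ℕ → Fin d), ℝ), ∀ T : ℝ, 0 ≤ T →
        ∫ x, opExp (T • (LA - ContinuousLinearMap.id ℝ C((ℕ → Fin d), ℝ) + MV)) f x ∂ν
          = Real.exp ((∫ x, V x ∂ν) * T) * ∫ x, f x ∂ν) := by
  have : Nonempty (Fin d) := ⟨⟨0, by omega⟩⟩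
  set B := LA - ContinuousLinearMap.id ℝ C((ℕ → Fin d), ℝ) + MV with hBdef
  have hBapp : ∀ (f : C((ℕ → Fin d), ℝ)) x, B f x = LA f x - f x + V x * f x := fun f x => by
    simp [hBdef, hMV]
  have hB : PosMinPrinciple B := by
    intro g x₀ hg h0
    rw [hBapp, h0, hLA]
    simpa using Finset.sum_nonneg fun a _ => mul_nonneg (Real.exp_pos _).le (hg (cons a x₀))
  obtain ⟨r, ψ, hpos, h1, heig⟩ := exists_eigenfunctional hB
  obtain ⟨ν, hν, hint⟩ := exists_probabilityMeasure ψ hpos h1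
  have hr : ∫ x, V x ∂ν = r := by
    have hB1 : ∀ x, B 1 x = V x := fun x => by simp [hBapp, hLA, hAnorm]
    simp_rw [← hB1]
    rw [hint, heig, h1, mul_one]
  refine ⟨ν, hν, fun f => ?_, fun f T _ => ?_⟩
  · simp_rw [← hBapp]
    rw [hr, hint, hint, heig]
  · rw [hr, hint, hint]
    refine eigenfunctional_opExp (fun g => ?_) f
    rw [smul_apply, map_smul, heig, smul_eq_mul]
    ring
end
end

section
/- Dyson-series representation of the perturbed semigroup: let A : X → ℝ be a normalized continuous potential, V : X → ℝ continuous, f ∈ C(X,ℝ), T ≥ 0 and x ∈ X. For a word (a_1,…,a_n) ∈ {1,…,d}^n set y_0 = x and y_k = a_k·y_{k−1} (iterated concatenation). Then e^{T(𝓛_A − I + M_V)}(f)(x) = e^{T·V(x)}·e^{−T}·f(x) + Σ_{n=1}^∞ Σ_{(a_1,…,a_n) ∈ {1,…,d}^n} e^{A(y_1)}·⋯·e^{A(y_n)}·f(y_n)·𝓘_V^T(a_1,…,a_n; x), where 𝓘_V^T(a_1,…,a_n; x) = ∫_{[0,∞)^{n+1}} 1[t_0 + ⋯ + t_{n−1}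 ≤ T < t_0 + ⋯ + t_n] · exp( Σ_{k=0}^{n−1} t_k·V(y_k) + (T − Σ_{k=0}^{n−1} t_k)·V(y_n) ) · e^{−(t_0 + ⋯ + t_n)} dt_0 ⋯ dt_n. -/
/-!
The perturbed semigroup `u(t) = e^{t(𝓛_A - I + M_V)} f` satisfies, at every point `x`, the Duhamel
equation `u(t) = S(t) f + ∫_0^t S(t-s) 𝓛_A u(s) ds` with `S(t) = e^{t(V-1)}` (`duhamel_equation`).
Iterating it `N` times produces the terms `dysonTerm` and a remainder which is an `N`-fold Duhamel
integral of `u`; as `A` is normalized, this remainder is `O((G T)^N / N!)` (`abs_dysonRem_le`).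
The same bound controls each term, so the series converges absolutely to `u`
(`hasSum_dysonTerm`).

The iterated integrals are identified with the sums over words by integrating out the first
waiting time `t_0` with Fubini (`integral_dysonIntegrand_succ`): the remaining waiting times and
letters form the same integral for the word `(a_2, …, a_n)`, base point `a_1 x` and horizon
`T - t_0`, whence `sum_words_eq_dysonTerm` by induction on the length.
-/

open MeasureTheory Filter

noncomputable section

/-- Iterated concatenation: given a word `a = (a_1,…,a_n)` (zero-indexed, `a i = a_{i+1}`),
`pt x a k = y_k` where `y_0 = x` and `y_{k+1} = a_{k+1}·y_k`. -/
def pt {d : ℕ} (x : ℕ → Fin d) {n : ℕ} (a : Fin n → Fin d) : ℕ → (ℕ → Fin d)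
  | 0 => x
  | k + 1 => if h : k < n then cons (a ⟨k, h⟩) (pt x a k) else pt x a k

/-- The coefficient `𝓘_V^T(a_1,…,a_n; x)` of the Dyson series. -/
def calI {d : ℕ} (T : ℝ) (V : (ℕ → Fin d) → ℝ) (x : ℕ → Fin d) {n : ℕ}
    (a : Fin n → Fin d) : ℝ :=
  ∫ t : Fin (n + 1) → ℝ,
    Set.indicator
      {t : Fin (n + 1) → ℝ | (∀ i, 0 ≤ t i) ∧
        (∑ k : Fin n, t k.castSucc) ≤ T ∧ T < ∑ k, t k}
      (fun t => Real.exp ((∑ k : Fin n, t k.castSucc * V (pt x a (k : ℕ))) +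
        (T - ∑ k : Fin n, t k.castSucc) * V (pt x a n) - ∑ k, t k)) t

/-! ### The simplex integral -/

/-- The integrand of `calI`, with the values `V(y_k)` replaced by arbitrary numbers `v k`. -/
def dysonIntegrand {n : ℕ} (T : ℝ) (v : ℕ → ℝ) : (Fin (n + 1) → ℝ) → ℝ :=
  Set.indicator
    {t : Fin (n + 1) → ℝ | (∀ i, 0 ≤ t i) ∧
      (∑ k : Fin n, t k.castSucc) ≤ T ∧ T < ∑ k, t k}
    (fun t => Real.exp ((∑ k : Fin n, t k.castSucc * v (k : ℕ)) +
      (T - ∑ k : Fin n, t k.castSucc) * v n - ∑ k, t k))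

lemma measurable_dysonIntegrand {n : ℕ} (T : ℝ) (v : ℕ → ℝ) :
    Measurable (dysonIntegrand (n := n) T v) := by
  unfold dysonIntegrand
  apply Measurable.indicator
  · fun_prop
  · apply MeasurableSet.inter
    · have h : MeasurableSet (⋂ i, {t : Fin (n + 1) → ℝ | 0 ≤ t i}) :=
        MeasurableSet.iInter fun i => measurableSet_le measurable_const (measurable_pi_apply i)
      have e : (⋂ i, {t : Fin (n + 1) → ℝ | 0 ≤ t i}) = {t | ∀ i, 0 ≤ t i} := by
        ext t
        rw [Set.mem_iInter]
        rfl
      rw [e] at h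
      exact h
    · have h1 : MeasurableSet {t : Fin (n + 1) → ℝ | (∑ k : Fin n, t k.castSucc) ≤ T} :=
        measurableSet_le (by fun_prop) (by fun_prop)
      have h2 : MeasurableSet {t : Fin (n + 1) → ℝ | T < ∑ k, t k} :=
        measurableSet_lt (by fun_prop) (by fun_prop)
      exact h1.inter h2

/-- The total potential weight in the exponent is at most `T · max v`, so the integrand is
dominated by a constant times a product of exponential densities. -/
lemma integrable_dysonIntegrand {n : ℕ} (T : ℝ) (v : ℕ → ℝ) :
    Integrable (dysonIntegrand (n := n) T v) := by
  have hM : ∃ M : ℝ, ∀ k ≤ n, v k ≤ M := by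
    obtain ⟨M, hM⟩ := ((Set.finite_Iic n).image v).bddAbove
    exact ⟨M, fun k hk => hM ⟨k, hk, rfl⟩⟩
  obtain ⟨M, hM⟩ := hM
  have h1 : Integrable (Set.indicator (Set.Ici (0 : ℝ)) fun s : ℝ => Real.exp (-s)) := by
    rw [integrable_indicator_iff measurableSet_Ici, integrableOn_Ici_iff_integrableOn_Ioi]
    exact integrableOn_exp_neg_Ioi 0
  have h2 : Integrable (fun t : Fin (n + 1) → ℝ =>
      ∏ i, Set.indicator (Set.Ici (0 : ℝ)) (fun s : ℝ => Real.exp (-s)) (t i)) :=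
    Integrable.fintype_prod (f := fun _ => Set.indicator (Set.Ici (0 : ℝ))
      fun s : ℝ => Real.exp (-s)) (fun _ => h1)
  refine (h2.const_mul (Real.exp (T * M))).mono'
    (measurable_dysonIntegrand T v).aestronglyMeasurable (ae_of_all _ fun t => ?_)
  unfold dysonIntegrand
  by_cases ht : t ∈ {t : Fin (n + 1) → ℝ | (∀ i, 0 ≤ t i) ∧
      (∑ k : Fin n, t k.castSucc) ≤ T ∧ T < ∑ k, t k}
  · rw [Set.indicator_of_mem ht]
    obtain ⟨h0, hle, -⟩ := ht
    have e : ∀ i, Set.indicator (Set.Ici (0 : ℝ)) (fun s : ℝ => Real.exp (-s)) (t i)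
        = Real.exp (-t i) := fun i => Set.indicator_of_mem (h0 i) _
    simp only [e]
    rw [← Real.exp_sum, ← Real.exp_add, Real.norm_eq_abs, Real.abs_exp, Real.exp_le_exp,
      Finset.sum_neg_distrib]
    have a1 : ∑ k : Fin n, t k.castSucc * v k ≤ ∑ k : Fin n, t k.castSucc * M :=
      Finset.sum_le_sum fun k _ => mul_le_mul_of_nonneg_left (hM k k.2.le) (h0 _)
    rw [← Finset.sum_mul] at a1
    have a2 := mul_le_mul_of_nonneg_left (hM n le_rfl) (sub_nonneg.2 hle)
    linarith
  · rw [Set.indicator_of_notMem ht, norm_zero]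
    refine mul_nonneg (Real.exp_pos _).le (Finset.prod_nonneg fun i _ => ?_)
    exact Set.indicator_nonneg (fun _ _ => (Real.exp_pos _).le) _

/-- Conditioning on the first waiting time `s`. -/
lemma dysonIntegrand_cons {n : ℕ} (T : ℝ) (v : ℕ → ℝ) (s : ℝ) (t : Fin (n + 1) → ℝ) :
    dysonIntegrand (n := n + 1) T v (Fin.cons s t) =
      Set.indicator (Set.Icc 0 T) (fun s => Real.exp (s * (v 0 - 1)) *
        dysonIntegrand (n := n) (T - s) (fun k => v (k + 1)) t) s := by
  have hc : ∑ k : Fin (n + 1), (Fin.cons s t : Fin (n + 2) → ℝ) k.castSucc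
      = s + ∑ k : Fin n, t k.castSucc := by
    rw [Fin.sum_univ_succ]; simp
  have hs : ∑ k : Fin (n + 2), (Fin.cons s t : Fin (n + 2) → ℝ) k = s + ∑ k, t k := by
    rw [Fin.sum_univ_succ]; simp
  have hv : ∑ k : Fin (n + 1), (Fin.cons s t : Fin (n + 2) → ℝ) k.castSucc * v k
      = s * v 0 + ∑ k : Fin n, t k.castSucc * v (k + 1) := by
    rw [Fin.sum_univ_succ]; simp
  have h0 : (∀ i, 0 ≤ (Fin.cons s t : Fin (n + 2) → ℝ) i) ↔ 0 ≤ s ∧ ∀ i, 0 ≤ t i := by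
    rw [Fin.forall_fin_succ]; simp
  unfold dysonIntegrand
  classical
  simp only [Set.indicator_apply, Set.mem_ofPred_eq, hc, hs, hv, h0, Set.mem_Icc]
  by_cases h : (∀ i, 0 ≤ t i) ∧ (∑ k : Fin n, t k.castSucc) ≤ T - s ∧ T - s < ∑ k, t k
  · obtain ⟨p, q, r⟩ := h
    have hn : 0 ≤ ∑ k : Fin n, t k.castSucc := Finset.sum_nonneg fun _ _ => p _
    rw [if_pos (show (∀ i, 0 ≤ t i) ∧ (∑ k : Fin n, t k.castSucc) ≤ T - s ∧ T - s < ∑ k, t k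
      from ⟨p, q, r⟩)]
    by_cases h' : 0 ≤ s
    · rw [if_pos ⟨⟨h', p⟩, by linarith, by linarith⟩, if_pos ⟨h', by linarith⟩, ← Real.exp_add]
      congr 1; ring
    · rw [if_neg (by tauto), if_neg (by tauto)]
  · rw [if_neg h, mul_zero, ite_self, if_neg]
    rintro ⟨⟨-, p⟩, q, r⟩
    exact h ⟨p, by linarith, by linarith⟩

/-- Fubini for the first waiting time: the simplex integrals form a chain of convolutions. -/
lemma integral_dysonIntegrand_succ {n : ℕ} {T : ℝ} (hT : 0 ≤ T) (v : ℕ → ℝ) :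
    IntervalIntegrable (fun s => Real.exp (-s * (v 0 - 1)) *
      ∫ t, dysonIntegrand (n := n) s (fun k => v (k + 1)) t) volume 0 T ∧
    ∫ t, dysonIntegrand (n := n + 1) T v t = Real.exp (T * (v 0 - 1)) *
      ∫ s in (0 : ℝ)..T, Real.exp (-s * (v 0 - 1)) *
        ∫ t, dysonIntegrand (n := n) s (fun k => v (k + 1)) t := by
  have mp := (volume_preserving_piFinSuccAbove (fun _ : Fin (n + 2) => ℝ) 0).symm
  have hcomp : ∀ p : ℝ × (Fin (n + 1) → ℝ), dysonIntegrand (n := n + 1) T v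
      ((MeasurableEquiv.piFinSuccAbove (fun _ : Fin (n + 2) => ℝ) 0).symm p) =
      Set.indicator (Set.Icc 0 T) (fun s => Real.exp (s * (v 0 - 1)) *
        dysonIntegrand (n := n) (T - s) (fun k => v (k + 1)) p.2) p.1 := by
    intro p
    rw [← dysonIntegrand_cons]
    congr 1
    simp [MeasurableEquiv.piFinSuccAbove, Fin.insertNthEquiv]
  have hint : Integrable (fun p : ℝ × (Fin (n + 1) → ℝ) =>
      Set.indicator (Set.Icc 0 T) (fun s => Real.exp (s * (v 0 - 1)) *
        dysonIntegrand (n := n) (T - s) (fun k => v (k + 1)) p.2) p.1) := by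
    simp only [← hcomp]
    exact (mp.integrable_comp_emb (MeasurableEquiv.measurableEmbedding _)).2
      (integrable_dysonIntegrand T v)
  have hinner : ∀ s, ∫ t, Set.indicator (Set.Icc 0 T) (fun s => Real.exp (s * (v 0 - 1)) *
        dysonIntegrand (n := n) (T - s) (fun k => v (k + 1)) t) s
      = Set.indicator (Set.Icc 0 T) (fun s => Real.exp (s * (v 0 - 1)) *
        ∫ t, dysonIntegrand (n := n) (T - s) (fun k => v (k + 1)) t) s := by
    intro s
    by_cases hs : s ∈ Set.Icc 0 T
    · simp only [Set.indicator_of_mem hs, integral_const_mul]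
    · simp only [Set.indicator_of_notMem hs, integral_zero]
  have hI : IntervalIntegrable (fun s => Real.exp (s * (v 0 - 1)) *
      ∫ t, dysonIntegrand (n := n) (T - s) (fun k => v (k + 1)) t) volume 0 T := by
    have := hint.integral_prod_left
    simp only [hinner] at this
    rw [intervalIntegrable_iff_integrableOn_Icc_of_le hT]
    exact (integrable_indicator_iff measurableSet_Icc).1 this
  have heq : ∫ t, dysonIntegrand (n := n + 1) T v t = ∫ s in (0 : ℝ)..T,
      Real.exp (s * (v 0 - 1)) * ∫ t, dysonIntegrand (n := n) (T - s) (fun k => v (k + 1)) t := by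
    rw [← mp.integral_comp (MeasurableEquiv.measurableEmbedding _)]
    simp only [hcomp]
    rw [Measure.volume_eq_prod, integral_prod _ hint]
    simp only [hinner]
    rw [integral_indicator measurableSet_Icc, integral_Icc_eq_integral_Ioc,
      intervalIntegral.integral_of_le hT]
  -- the substitution `s ↦ T - s`
  have hsub : ∀ s, Real.exp ((T - s) * (v 0 - 1)) *
      (∫ t, dysonIntegrand (n := n) (T - (T - s)) (fun k => v (k + 1)) t)
      = Real.exp (T * (v 0 - 1)) * (Real.exp (-s * (v 0 - 1)) *
        ∫ t, dysonIntegrand (n := n) s (fun k => v (k + 1)) t) := by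
    intro s
    rw [← mul_assoc, ← Real.exp_add, sub_sub_cancel]
    congr 2; ring
  constructor
  · have h := (hI.comp_sub_left T).symm
    simp only [sub_self, sub_zero, hsub] at h
    have h' := h.const_mul (Real.exp (T * (v 0 - 1)))⁻¹
    refine h'.congr (fun s _ => ?_)
    exact inv_mul_cancel_left₀ (Real.exp_ne_zero _) _
  · rw [heq, ← intervalIntegral.integral_const_mul]
    simp only [← hsub]
    have := intervalIntegral.integral_comp_sub_left (a := 0) (b := T) (fun s =>
      Real.exp (s * (v 0 - 1)) *
        ∫ t, dysonIntegrand (n := n) (T - s) (fun k => v (k + 1)) t) T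
    simp only [sub_self, sub_zero] at this
    exact this.symm

lemma integral_dysonIntegrand_zero {T : ℝ} (hT : 0 ≤ T) (v : ℕ → ℝ) :
    ∫ t, dysonIntegrand (n := 0) T v t = Real.exp (T * (v 0 - 1)) := by
  have mp := (volume_preserving_funUnique (Fin 1) ℝ).symm
  refine (mp.integral_comp (MeasurableEquiv.measurableEmbedding _) _).symm.trans ?_
  have : ∀ s : ℝ, dysonIntegrand (n := 0) T v ((MeasurableEquiv.funUnique (Fin 1) ℝ).symm s)
      = Set.indicator (Set.Ioi T) (fun s => Real.exp (T * v 0) * Real.exp (-s)) s := by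
    intro s
    classical
    have hs : ∀ i, (MeasurableEquiv.funUnique (Fin 1) ℝ).symm s i = s := fun i => rfl
    unfold dysonIntegrand
    simp only [Set.indicator_apply, Set.mem_ofPred_eq, hs, Set.mem_Ioi, ← Real.exp_add]
    by_cases h : T < s
    · have : 0 ≤ s := hT.trans h.le
      simp [h, hT, this]; ring
    · simp [h]
  simp only [this]
  rw [integral_indicator measurableSet_Ioi, integral_const_mul, integral_exp_neg_Ioi,
    ← Real.exp_add]
  congr 1; ring

lemma pt_cons {d : ℕ} (x : ℕ → Fin d) {n : ℕ} (b : Fin d) (a : Fin n → Fin d) (k : ℕ) :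
    pt x (Fin.cons b a : Fin (n + 1) → Fin d) (k + 1) = pt (cons b x) a k := by
  induction k with
  | zero => simp [pt]
  | succ k ih =>
    rw [pt, ih, pt]
    by_cases h : k < n
    · rw [dif_pos h, dif_pos (by omega)]
      rfl
    · rw [dif_neg h, dif_neg (by omega)]

lemma calI_eq {d : ℕ} (T : ℝ) (V : (ℕ → Fin d) → ℝ) (x : ℕ → Fin d) {n : ℕ}
    (a : Fin n → Fin d) :
    calI T V x a = ∫ t, dysonIntegrand (n := n) T (fun k => V (pt x a k)) t := rfl

lemma calI_cons {d : ℕ} {T : ℝ} (hT : 0 ≤ T) (V : (ℕ → Fin d) → ℝ) (x : ℕ → Fin d) {n : ℕ}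
    (b : Fin d) (a : Fin n → Fin d) :
    IntervalIntegrable (fun s => Real.exp (-s * (V x - 1)) * calI s V (cons b x) a) volume 0 T ∧
    calI T V x (Fin.cons b a : Fin (n + 1) → Fin d) = Real.exp (T * (V x - 1)) *
      ∫ s in (0 : ℝ)..T, Real.exp (-s * (V x - 1)) * calI s V (cons b x) a := by
  have := integral_dysonIntegrand_succ (n := n) hT
    (fun k => V (pt x (Fin.cons b a : Fin (n + 1) → Fin d) k))
  simp only [pt_cons] at this
  exact this

/-! ### The iterated Duhamel terms -/

/-- The Duhamel map: `g` is sent to `∫_0^t S(t-s) 𝓛_A g(s) ds`, where `S` is the multiplication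
semigroup `S(t) = e^{t(V-1)}`, evaluated pointwise. -/
def duhamel {d : ℕ} (A V : (ℕ → Fin d) → ℝ) (g : ℝ → (ℕ → Fin d) → ℝ) (t : ℝ)
    (x : ℕ → Fin d) : ℝ :=
  Real.exp (t * (V x - 1)) * ∫ s in (0 : ℝ)..t, Real.exp (-s * (V x - 1)) *
    ∑ b : Fin d, Real.exp (A (cons b x)) * g s (cons b x)

/-- The `n`-th term of the Dyson series, as an iterated Duhamel integral. -/
def dysonTerm {d : ℕ} (A V f : (ℕ → Fin d) → ℝ) : ℕ → ℝ → (ℕ → Fin d) → ℝ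
  | 0 => fun t x => Real.exp (t * (V x - 1)) * f x
  | n + 1 => duhamel A V (dysonTerm A V f n)

lemma continuous_duhamel {d : ℕ} (A V : (ℕ → Fin d) → ℝ) {g : ℝ → (ℕ → Fin d) → ℝ}
    (hg : ∀ x, Continuous fun t => g t x) (x : ℕ → Fin d) :
    Continuous fun t => duhamel A V g t x := by
  unfold duhamel
  refine Continuous.mul (by fun_prop) ?_
  exact intervalIntegral.continuous_primitive
    (fun a b => Continuous.intervalIntegrable (by fun_prop) a b) 0

lemma continuous_dysonTerm {d : ℕ} (A V f : (ℕ → Fin d) → ℝ) (n : ℕ) (x : ℕ → Fin d) :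
    Continuous fun t => dysonTerm A V f n t x := by
  induction n generalizing x with
  | zero => simp only [dysonTerm]; fun_prop
  | succ n ih => exact continuous_duhamel A V ih x

lemma duhamel_sub {d : ℕ} (A V : (ℕ → Fin d) → ℝ) {g h : ℝ → (ℕ → Fin d) → ℝ}
    (hg : ∀ x, Continuous fun t => g t x) (hh : ∀ x, Continuous fun t => h t x) (t : ℝ)
    (x : ℕ → Fin d) :
    duhamel A V (fun t x => g t x - h t x) t x = duhamel A V g t x - duhamel A V h t x := by
  unfold duhamel
  rw [← mul_sub, ← intervalIntegral.integral_sub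
    (Continuous.intervalIntegrable (by fun_prop) _ _)
    (Continuous.intervalIntegrable (by fun_prop) _ _)]
  simp only [mul_sub, Finset.sum_sub_distrib]

/-- Splitting off the first letter of the word matches the recursion for `dysonTerm`. -/
lemma sum_words_eq_dysonTerm {d : ℕ} (A V f : (ℕ → Fin d) → ℝ) (n : ℕ) {T : ℝ} (hT : 0 ≤ T)
    (x : ℕ → Fin d) :
    ∑ a : Fin n → Fin d, (∏ k : Fin n, Real.exp (A (pt x a ((k : ℕ) + 1)))) * f (pt x a n) *
      calI T V x a = dysonTerm A V f n T x := by
  induction n generalizing T x with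
  | zero =>
    rw [Fintype.sum_unique, calI_eq, integral_dysonIntegrand_zero hT]
    simp [pt, dysonTerm, mul_comm]
  | succ n ih =>
    rw [← (Fin.consEquiv (fun _ : Fin (n + 1) => Fin d)).sum_comp, Fintype.sum_prod_type]
    have hc : ∀ (b : Fin d) (a : Fin n → Fin d),
        Fin.consEquiv (fun _ : Fin (n + 1) => Fin d) (b, a)
          = (Fin.cons b a : Fin (n + 1) → Fin d) := fun _ _ => rfl
    simp only [hc, pt_cons, Fin.prod_univ_succ, Fin.val_zero, Fin.val_succ]
    have h0 : ∀ (b : Fin d) (a : Fin n → Fin d), pt (cons b x) a 0 = cons b x := fun _ _ => rfl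
    simp only [h0, (calI_cons hT V x _ _).2, dysonTerm, duhamel]
    have e : ∫ s in (0 : ℝ)..T, Real.exp (-s * (V x - 1)) *
          ∑ b : Fin d, Real.exp (A (cons b x)) * dysonTerm A V f n s (cons b x)
        = ∫ s in (0 : ℝ)..T, ∑ b : Fin d, ∑ a : Fin n → Fin d,
          (Real.exp (A (cons b x)) * (∏ k : Fin n, Real.exp (A (pt (cons b x) a ((k : ℕ) + 1))))
            * f (pt (cons b x) a n)) * (Real.exp (-s * (V x - 1)) * calI s V (cons b x) a) := by
      refine intervalIntegral.integral_congr fun s hs => ?_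
      rw [Set.uIcc_of_le hT] at hs
      simp only [← ih hs.1, Finset.mul_sum]
      refine Finset.sum_congr rfl fun b _ => Finset.sum_congr rfl fun a _ => ?_
      ring
    rw [e, intervalIntegral.integral_finsetSum, Finset.mul_sum]
    · refine Finset.sum_congr rfl fun b _ => ?_
      rw [intervalIntegral.integral_finsetSum, Finset.mul_sum]
      · refine Finset.sum_congr rfl fun a _ => ?_
        rw [intervalIntegral.integral_const_mul]
        ring
      · exact fun a _ => (calI_cons hT V x b a).1.const_mul _
    · intro b _
      simpa only [Finset.sum_fn] using IntervalIntegrable.sum Finset.univ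
        (fun a _ => (calI_cons hT V x b a).1.const_mul _)

/-! ### Convergence -/

/-- The remainder after `N` terms. -/
def dysonRem {d : ℕ} (A V f : (ℕ → Fin d) → ℝ) (u : ℝ → (ℕ → Fin d) → ℝ) (N : ℕ) (t : ℝ)
    (x : ℕ → Fin d) : ℝ :=
  u t x - ∑ n ∈ Finset.range N, dysonTerm A V f n t x

lemma dysonRem_succ {d : ℕ} (A V f : (ℕ → Fin d) → ℝ) {u : ℝ → (ℕ → Fin d) → ℝ}
    (hu : ∀ x, Continuous fun t => u t x)
    (hD : ∀ t x, u t x = Real.exp (t * (V x - 1)) * f x + duhamel A V u t x) (N : ℕ) (t : ℝ)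
    (x : ℕ → Fin d) :
    dysonRem A V f u (N + 1) t x = duhamel A V (dysonRem A V f u N) t x := by
  induction N generalizing t x with
  | zero =>
    have : dysonRem A V f u 0 = u := by funext t x; simp [dysonRem]
    rw [this, dysonRem, hD t x]; simp [dysonTerm]
  | succ N ih =>
    have h1 : dysonRem A V f u (N + 1)
        = fun t x => dysonRem A V f u N t x - dysonTerm A V f N t x := by
      funext t x; simp only [dysonRem, Finset.sum_range_succ]; ring
    have hc : ∀ x, Continuous fun t => dysonRem A V f u N t x := fun x =>
      (hu x).sub (continuous_finsetSum _ fun n _ => continuous_dysonTerm A V f n x)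
    have h2 : dysonRem A V f u (N + 2) t x
        = dysonRem A V f u (N + 1) t x - dysonTerm A V f (N + 1) t x := by
      simp only [dysonRem, Finset.sum_range_succ]; ring
    rw [h2, ih, h1, duhamel_sub A V hc (continuous_dysonTerm A V f N)]
    rfl

/-- Each application of the Duhamel map gains a factor `G t / (N + 1)`, because `A` is normalized
and `e^{(t-s)(V-1)} ≤ G`. -/
lemma abs_dysonRem_le {d : ℕ} (A V f : (ℕ → Fin d) → ℝ) {u : ℝ → (ℕ → Fin d) → ℝ}
    (hAnorm : ∀ x, ∑ a : Fin d, Real.exp (A (cons a x)) = 1)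
    (hu : ∀ x, Continuous fun t => u t x)
    (hD : ∀ t x, u t x = Real.exp (t * (V x - 1)) * f x + duhamel A V u t x)
    {T C G : ℝ} (hC : ∀ t ∈ Set.Icc 0 T, ∀ x, |u t x| ≤ C)
    (hG : ∀ r ∈ Set.Icc 0 T, ∀ x, Real.exp (r * (V x - 1)) ≤ G) (N : ℕ) (t : ℝ)
    (ht : t ∈ Set.Icc 0 T) (x : ℕ → Fin d) :
    |dysonRem A V f u N t x| ≤ C * ((G * t) ^ N / N.factorial) := by
  induction N generalizing t x with
  | zero => simpa [dysonRem] using hC t ht x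
  | succ N ih =>
    have hG0 : 0 ≤ G := (Real.exp_pos _).le.trans (hG t ht x)
    rw [dysonRem_succ A V f hu hD, duhamel, ← intervalIntegral.integral_const_mul,
      ← Real.norm_eq_abs]
    have hb : ∀ s ∈ Set.Ioc 0 t, ‖Real.exp (t * (V x - 1)) * (Real.exp (-s * (V x - 1)) *
        ∑ b : Fin d, Real.exp (A (cons b x)) * dysonRem A V f u N s (cons b x))‖
        ≤ (C * G ^ (N + 1) / N.factorial) * s ^ N := by
      intro s hs
      have hsT : s ∈ Set.Icc 0 T := ⟨hs.1.le, hs.2.trans ht.2⟩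
      rw [← mul_assoc, ← Real.exp_add, show t * (V x - 1) + -s * (V x - 1) = (t - s) * (V x - 1)
        by ring, norm_mul, Real.norm_eq_abs, Real.abs_exp]
      have h1 := hG (t - s) ⟨by linarith [hs.2], by linarith [hs.1, ht.2]⟩ x
      have h2 : ‖∑ b : Fin d, Real.exp (A (cons b x)) * dysonRem A V f u N s (cons b x)‖
          ≤ C * ((G * s) ^ N / N.factorial) := by
        calc _ ≤ ∑ b : Fin d, Real.exp (A (cons b x)) * (C * ((G * s) ^ N / N.factorial)) := by
              refine norm_sum_le_of_le _ fun b _ => ?_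
              rw [norm_mul, Real.norm_eq_abs, Real.abs_exp]
              exact mul_le_mul_of_nonneg_left (ih s hsT _) (Real.exp_pos _).le
          _ = _ := by rw [← Finset.sum_mul, hAnorm, one_mul]
      calc _ ≤ G * (C * ((G * s) ^ N / N.factorial)) :=
            mul_le_mul h1 h2 (norm_nonneg _) hG0
        _ = _ := by rw [mul_pow]; ring
    have := intervalIntegral.norm_integral_le_of_norm_le (μ := volume) ht.1 (ae_of_all _ hb)
      (Continuous.intervalIntegrable (by fun_prop) _ _)
    refine this.trans_eq ?_
    rw [intervalIntegral.integral_const_mul, integral_pow, Nat.factorial_succ]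
    have : (N.factorial : ℝ) ≠ 0 := by positivity
    push_cast
    field_simp
    simp [mul_pow, mul_assoc]

/-- A bounded solution of the Duhamel equation is the sum of its Dyson series. -/
lemma hasSum_dysonTerm {d : ℕ} (A V f : (ℕ → Fin d) → ℝ) {u : ℝ → (ℕ → Fin d) → ℝ}
    (hAnorm : ∀ x, ∑ a : Fin d, Real.exp (A (cons a x)) = 1)
    (hu : ∀ x, Continuous fun t => u t x)
    (hD : ∀ t x, u t x = Real.exp (t * (V x - 1)) * f x + duhamel A V u t x)
    {T C G : ℝ} (hT : 0 ≤ T) (hC : ∀ t ∈ Set.Icc 0 T, ∀ x, |u t x| ≤ C)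
    (hG : ∀ r ∈ Set.Icc 0 T, ∀ x, Real.exp (r * (V x - 1)) ≤ G) (x : ℕ → Fin d) :
    HasSum (fun n => dysonTerm A V f n T x) (u T x) := by
  have hR := fun N => abs_dysonRem_le A V f hAnorm hu hD hC hG N T ⟨hT, le_rfl⟩ x
  have hS : Summable fun N : ℕ => C * ((G * T) ^ N / N.factorial) :=
    (Real.summable_pow_div_factorial (G * T)).mul_left C
  have hS' := (summable_nat_add_iff 1).2 hS
  have hsum : Summable fun n => dysonTerm A V f n T x := by
    refine Summable.of_norm_bounded (hS.add hS') fun n => ?_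
    have e : dysonTerm A V f n T x = dysonRem A V f u n T x - dysonRem A V f u (n + 1) T x := by
      simp only [dysonRem, Finset.sum_range_succ]; ring
    rw [e]
    exact (norm_sub_le _ _).trans (add_le_add (hR n) (hR (n + 1)))
  rw [hsum.hasSum_iff_tendsto_nat]
  have h0 : Tendsto (fun N => dysonRem A V f u N T x) atTop (nhds 0) :=
    squeeze_zero_norm hR hS.tendsto_atTop_zero
  simpa [dysonRem] using h0.const_sub (u T x)

/-! ### The semigroup -/

lemma hasDerivAt_tsum_exp {E : Type*} [NormedAddCommGroup E] [NormedSpace ℝ E] [CompleteSpace E]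
    (B : E →L[ℝ] E) (f : E) (t : ℝ) :
    HasDerivAt (fun t : ℝ => ∑' n : ℕ, ((Nat.factorial n : ℝ)⁻¹ • ((t • B) ^ n) f))
      (B (∑' n : ℕ, ((Nat.factorial n : ℝ)⁻¹ • ((t • B) ^ n) f))) t := by
  have e : ∀ t : ℝ, ∑' n : ℕ, ((Nat.factorial n : ℝ)⁻¹ • ((t • B) ^ n) f)
      = NormedSpace.exp (t • B) f := by
    intro t
    have h : HasSum (fun n : ℕ => (n.factorial : ℝ)⁻¹ • (t • B) ^ n)
        (NormedSpace.exp (t • B)) := NormedSpace.exp_series_hasSum_exp' (𝕂 := ℝ) (t • B)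
    exact (h.mapL (ContinuousLinearMap.apply ℝ E f)).tsum_eq
  simp only [e]
  exact (ContinuousLinearMap.apply ℝ E f).hasFDerivAt.comp_hasDerivAt t
    (hasDerivAt_exp_smul_const' B t)

/-- Variation of constants: `e^{-s(V(x)-1)} u(s)(x)` has derivative `e^{-s(V(x)-1)} (𝓛_A u(s))(x)`
when `u' = (𝓛_A - I + M_V) u`. -/
lemma duhamel_equation {d : ℕ} (A V : (ℕ → Fin d) → ℝ)
    (LA MV : C((ℕ → Fin d), ℝ) →L[ℝ] C((ℕ → Fin d), ℝ))
    (hLA : ∀ (f : C((ℕ → Fin d), ℝ)) (x),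
      LA f x = ∑ a : Fin d, Real.exp (A (cons a x)) * f (cons a x))
    (hMV : ∀ (f : C((ℕ → Fin d), ℝ)) (x), MV f x = V x * f x)
    (f : C((ℕ → Fin d), ℝ)) (u : ℝ → C((ℕ → Fin d), ℝ)) (hu0 : u 0 = f)
    (hu : ∀ t, HasDerivAt u
      ((LA - ContinuousLinearMap.id ℝ C((ℕ → Fin d), ℝ) + MV) (u t)) t)
    (t : ℝ) (x : ℕ → Fin d) :
    u t x = Real.exp (t * (V x - 1)) * f x + duhamel A V (fun t x => u t x) t x := by
  have hx : ∀ (s : ℝ) (y), HasDerivAt (fun s => u s y)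
      (((LA - ContinuousLinearMap.id ℝ C((ℕ → Fin d), ℝ) + MV) (u s)) y) s := fun s y =>
    (ContinuousMap.evalCLM ℝ y : C((ℕ → Fin d), ℝ) →L[ℝ] ℝ).hasFDerivAt.comp_hasDerivAt s (hu s)
  have hcont : ∀ y, Continuous fun s => u s y := fun y =>
    continuous_iff_continuousAt.2 fun s => (hx s y).continuousAt
  have hder : ∀ s, HasDerivAt (fun s => Real.exp (-s * (V x - 1)) * u s x)
      (Real.exp (-s * (V x - 1)) * ∑ b : Fin d, Real.exp (A (cons b x)) * u s (cons b x)) s := by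
    intro s
    have h1 : HasDerivAt (fun s : ℝ => Real.exp (-s * (V x - 1)))
        (Real.exp (-s * (V x - 1)) * (-1 * (V x - 1))) s :=
      (((hasDerivAt_id s).neg).mul_const (V x - 1)).exp
    refine (h1.mul (hx s x)).congr_deriv ?_
    simp only [add_apply, sub_apply,
      ContinuousLinearMap.id_apply, ContinuousMap.add_apply, ContinuousMap.sub_apply, hLA, hMV]
    ring
  have hFTC := intervalIntegral.integral_eq_sub_of_hasDerivAt (a := 0) (b := t)
    (fun s _ => hder s) (Continuous.intervalIntegrable (by fun_prop) _ _)
  rw [duhamel, hFTC]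
  have e : Real.exp (t * (V x - 1)) * Real.exp (-t * (V x - 1)) = 1 := by
    rw [← Real.exp_add]; simp
  simp only [neg_zero, zero_mul, Real.exp_zero, one_mul, hu0]
  linear_combination -(u t x) * e

/-- **Dyson-series representation of the perturbed semigroup.** -/
theorem stmt_3 (d : ℕ) (hd : 2 ≤ d)
    (A V : (ℕ → Fin d) → ℝ) (hA : Continuous A) (hV : Continuous V)
    (hAnorm : ∀ x, ∑ a : Fin d, Real.exp (A (cons a x)) = 1)
    (LA MV : C((ℕ → Fin d), ℝ) →L[ℝ] C((ℕ → Fin d), ℝ))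
    (hLA : ∀ (f : C((ℕ → Fin d), ℝ)) (x), LA f x = ∑ a : Fin d, Real.exp (A (cons a x)) * f (cons a x))
    (hMV : ∀ (f : C((ℕ → Fin d), ℝ)) (x), MV f x = V x * f x)
    (f : C((ℕ → Fin d), ℝ)) (T : ℝ) (hT : 0 ≤ T) (x : ℕ → Fin d) :
    Summable (fun n : ℕ => ∑ a : Fin (n + 1) → Fin d,
      (∏ k : Fin (n + 1), Real.exp (A (pt x a ((k : ℕ) + 1)))) * f (pt x a (n + 1)) *
        calI T V x a) ∧
    opExp (T • (LA - ContinuousLinearMap.id ℝ C((ℕ → Fin d), ℝ) + MV)) f x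
      = Real.exp (T * V x) * Real.exp (-T) * f x
        + ∑' n : ℕ, ∑ a : Fin (n + 1) → Fin d,
            (∏ k : Fin (n + 1), Real.exp (A (pt x a ((k : ℕ) + 1)))) * f (pt x a (n + 1)) *
              calI T V x a := by
  set B := LA - ContinuousLinearMap.id ℝ C((ℕ → Fin d), ℝ) + MV with hB
  let u : ℝ → C((ℕ → Fin d), ℝ) := fun t => opExp (t • B) f
  have hu0 : u 0 = f := by
    simp only [u, opExp, zero_smul]
    rw [tsum_eq_single 0 fun n hn => by simp [hn]]
    simp
  have hu : ∀ t, HasDerivAt u (B (u t)) t := hasDerivAt_tsum_exp B f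
  have hucont : Continuous u := continuous_iff_continuousAt.2 fun s => (hu s).continuousAt
  have hD := duhamel_equation A V LA MV hLA hMV f u hu0 hu
  obtain ⟨C, hC⟩ := (isCompact_Icc (a := (0 : ℝ)) (b := T)).exists_bound_of_continuousOn
    hucont.continuousOn
  obtain ⟨M, hM⟩ := isCompact_univ.exists_bound_of_continuousOn hV.continuousOn
  have hM0 : 0 ≤ M := (norm_nonneg _).trans (hM x (Set.mem_univ x))
  have hsum : HasSum (fun n => dysonTerm A V f n T x) (u T x) := by
    refine hasSum_dysonTerm A V f (u := fun t x => u t x) (C := C) (G := Real.exp (T * M)) hAnorm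
      (fun y => (ContinuousMap.evalCLM ℝ y).continuous.comp hucont) hD hT
      (fun t ht y => ((u t).norm_coe_le_norm y).trans (hC t ht)) (fun r hr y => ?_) x
    rw [Real.exp_le_exp]
    have h1 : V y - 1 ≤ M := by
      have := (le_abs_self _).trans (hM y (Set.mem_univ y))
      linarith
    exact (mul_le_mul_of_nonneg_left h1 hr.1).trans (mul_le_mul_of_nonneg_right hr.2 hM0)
  simp only [sum_words_eq_dysonTerm A V f _ hT x]
  refine ⟨(summable_nat_add_iff 1).2 hsum.summable, ?_⟩
  rw [show opExp (T • B) f x = u T x from rfl, ← hsum.tsum_eq,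
    hsum.summable.tsum_eq_zero_add]
  congr 1
  rw [dysonTerm, ← Real.exp_add, show T * V x + -T = T * (V x - 1) by ring]
end
end

section
/- Positivity improving property of the semigroup: let A : X → ℝ be a normalized continuous potential. If f ∈ C(X,ℝ) is nonnegative and there exist x ∈ X and T > 0 such that e^{T(𝓛_A − I)}(f)(x) = 0, then f(z) = 0 for every z ∈ X. -/
/-!
Since `L = LA` commutes with the identity, `e^{T(L - I)} = e^{-T} e^{TL}`, and for `f ≥ 0` every term
of the series `∑ Tⁿ/n! (Lⁿ f)(x)` is nonnegative. If the sum vanishes, then `(Lⁿ f)(x) = 0` for every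
`n`. Now `(Lⁿ f)(x)` is a combination with strictly positive weights of the values of `f` at the points
`wx`, with `w` a word of length `n`, so `f` vanishes on the whole backward orbit of `x`
(`eq_zero_of_ruelle_pow_eq_zero`). That orbit is dense (`tendsto_glue`), hence `f = 0` by continuity.
-/

open MeasureTheory Filter

noncomputable section

/-- The point whose first `n` letters are those of `z`, followed by the sequence `x`; as `z` varies,
these are the points of `σ⁻ⁿ(x)`. -/
def glue {d : ℕ} (n : ℕ) (z x : ℕ → Fin d) : ℕ → Fin d :=
  fun k => if k < n then z k else x (k - n)

lemma glue_cons {d : ℕ} (n : ℕ) (z x : ℕ → Fin d) :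
    glue n z (cons (z n) x) = glue (n + 1) z x := by
  funext k
  unfold glue
  rcases lt_trichotomy k n with h | h | h
  · simp [h, Nat.lt_succ_of_lt h]
  · subst h
    simp [cons]
  · obtain ⟨m, rfl⟩ := Nat.exists_eq_add_of_lt h
    have h1 : n + m + 1 - n = m + 1 := by omega
    have h2 : n + m + 1 - (n + 1) = m := by omega
    have h3 : ¬ n + m + 1 < n := by omega
    have h4 : ¬ n + m + 1 < n + 1 := by omega
    rw [if_neg h3, if_neg h4, h1, h2]
    rfl

lemma tendsto_glue {d : ℕ} (z x : ℕ → Fin d) :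
    Tendsto (fun n => glue n z x) atTop (nhds z) := by
  rw [tendsto_pi_nhds]
  intro k
  refine tendsto_const_nhds.congr' ?_
  filter_upwards [eventually_gt_atTop k] with n hn
  simp [glue, hn]

section

variable {d : ℕ} {A : (ℕ → Fin d) → ℝ}
  {LA : C((ℕ → Fin d), ℝ) →L[ℝ] C((ℕ → Fin d), ℝ)}

lemma ruelle_pow_nonneg
    (hLA : ∀ (f : C((ℕ → Fin d), ℝ)) (x),
      LA f x = ∑ a : Fin d, Real.exp (A (cons a x)) * f (cons a x))
    {f : C((ℕ → Fin d), ℝ)} (hf : ∀ z, 0 ≤ f z) (n : ℕ) : ∀ x, 0 ≤ (LA ^ n) f x := by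
  induction n with
  | zero => simpa using hf
  | succ n ih =>
    intro x
    rw [pow_succ', mul_apply_eq_comp, hLA]
    exact Finset.sum_nonneg fun a _ => mul_nonneg (Real.exp_pos _).le (ih _)

/-- If `(Lⁿ f)(x) = 0` with `f ≥ 0`, then `f` vanishes on `σ⁻ⁿ(x)`, because all the weights
`e^A` are strictly positive. -/
lemma eq_zero_of_ruelle_pow_eq_zero
    (hLA : ∀ (f : C((ℕ → Fin d), ℝ)) (x),
      LA f x = ∑ a : Fin d, Real.exp (A (cons a x)) * f (cons a x))
    {f : C((ℕ → Fin d), ℝ)} (hf : ∀ z, 0 ≤ f z) (z : ℕ → Fin d) (n : ℕ) :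
    ∀ x, (LA ^ n) f x = 0 → f (glue n z x) = 0 := by
  induction n with
  | zero =>
    intro x hx
    have hg : glue 0 z x = x := by funext k; simp [glue]
    rw [hg]
    simpa using hx
  | succ n ih =>
    intro x hx
    rw [pow_succ', mul_apply_eq_comp, hLA,
      Finset.sum_eq_zero_iff_of_nonneg fun a _ =>
        mul_nonneg (Real.exp_pos _).le (ruelle_pow_nonneg hLA hf n _)] at hx
    have hz := hx (z n) (Finset.mem_univ _)
    rw [← glue_cons]
    exact ih _ ((mul_eq_zero.mp hz).resolve_left (Real.exp_pos _).ne')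

end

section

variable {E : Type*} [NormedAddCommGroup E] [NormedSpace ℝ E] [CompleteSpace E]

lemma hasSum_exp_apply (B : E →L[ℝ] E) (v : E) :
    HasSum (fun n : ℕ => (n.factorial : ℝ)⁻¹ • (B ^ n) v) (NormedSpace.exp B v) := by
  have h : HasSum (fun n : ℕ => (n.factorial : ℝ)⁻¹ • B ^ n) (NormedSpace.exp B) :=
    NormedSpace.exp_series_hasSum_exp' (𝕂 := ℝ) B
  have hv := h.mapL (ContinuousLinearMap.apply ℝ E v)
  simpa only [ContinuousLinearMap.apply_apply, smul_apply] using hv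

lemma exp_smul_sub_id (L : E →L[ℝ] E) (T : ℝ) :
    NormedSpace.exp (T • (L - ContinuousLinearMap.id ℝ E))
      = Real.exp (-T) • NormedSpace.exp (T • L) := by
  let _ : NormedAlgebra ℚ (E →L[ℝ] E) := NormedAlgebra.restrictScalars ℚ ℝ _
  have hsplit : T • (L - ContinuousLinearMap.id ℝ E)
      = algebraMap ℝ (E →L[ℝ] E) (-T) + T • L := by
    rw [Algebra.algebraMap_eq_smul_one, smul_sub, neg_smul, sub_eq_neg_add]
    rfl
  rw [hsplit, NormedSpace.exp_add_of_commute (Algebra.commutes (-T) (T • L)),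
    ← NormedSpace.algebraMap_exp_comm, ← Real.exp_eq_exp_ℝ, Algebra.algebraMap_eq_smul_one,
    smul_one_mul]

/-- The identity `e^{TL} v = e^T e^{T(L - I)} v`, as a statement about the exponential series. -/
lemma hasSum_exp_smul (L : E →L[ℝ] E) (T : ℝ) (v : E) :
    HasSum (fun n : ℕ => (n.factorial : ℝ)⁻¹ • ((T • L) ^ n) v)
      (Real.exp T • ∑' n : ℕ, ((n.factorial : ℝ)⁻¹ •
        ((T • (L - ContinuousLinearMap.id ℝ E)) ^ n) v)) := by
  rw [(hasSum_exp_apply _ v).tsum_eq, exp_smul_sub_id, smul_apply, smul_smul,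
    ← Real.exp_add, add_neg_cancel, Real.exp_zero, one_smul]
  exact hasSum_exp_apply _ v

end

lemma hasSum_opExp_apply {X : Type*} [TopologicalSpace X] [CompactSpace X]
    (L : C(X, ℝ) →L[ℝ] C(X, ℝ)) (T : ℝ) (f : C(X, ℝ)) (x : X) :
    HasSum (fun n : ℕ => (n.factorial : ℝ)⁻¹ * ((T • L) ^ n) f x)
      (Real.exp T * opExp (T • (L - ContinuousLinearMap.id ℝ C(X, ℝ))) f x) :=
  (ContinuousMap.evalCLM ℝ x).hasSum (hasSum_exp_smul L T f)

/-- **Positivity improving property of the semigroup.** -/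
theorem stmt_4 (d : ℕ) (hd : 2 ≤ d)
    (A : (ℕ → Fin d) → ℝ) (hA : Continuous A)
    (hAnorm : ∀ x, ∑ a : Fin d, Real.exp (A (cons a x)) = 1)
    (LA : C((ℕ → Fin d), ℝ) →L[ℝ] C((ℕ → Fin d), ℝ))
    (hLA : ∀ (f : C((ℕ → Fin d), ℝ)) (x), LA f x = ∑ a : Fin d, Real.exp (A (cons a x)) * f (cons a x))
    (f : C((ℕ → Fin d), ℝ)) (hf : ∀ z, 0 ≤ f z)
    (x : ℕ → Fin d) (T : ℝ) (hT : 0 < T)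
    (h0 : opExp (T • (LA - ContinuousLinearMap.id ℝ C((ℕ → Fin d), ℝ))) f x = 0) :
    ∀ z, f z = 0 := by
  have hsum := hasSum_opExp_apply LA T f x
  rw [h0, mul_zero] at hsum
  have hterm : ∀ n : ℕ, (n.factorial : ℝ)⁻¹ * ((T • LA) ^ n) f x
      = (n.factorial : ℝ)⁻¹ * (T ^ n * (LA ^ n) f x) := fun n => by
    rw [smul_pow]
    rfl
  simp only [hterm] at hsum
  have hzero : ∀ n : ℕ, (LA ^ n) f x = 0 := by
    have h := (hasSum_zero_iff_of_nonneg fun n => mul_nonneg (by positivity)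
      (mul_nonneg (by positivity) (ruelle_pow_nonneg hLA hf n x))).mp hsum
    intro n
    have hn := congrFun h n
    have hc : (n.factorial : ℝ)⁻¹ ≠ 0 := by positivity
    exact (mul_eq_zero.mp ((mul_eq_zero.mp hn).resolve_left hc)).resolve_left
      (pow_pos hT n).ne'
  intro z
  refine tendsto_nhds_unique ((f.continuous.tendsto z).comp (tendsto_glue z x)) ?_
  refine tendsto_const_nhds.congr fun n => ?_
  exact (eq_zero_of_ruelle_pow_eq_zero hLA hf z n x (hzero n)).symm
end
end

section
/- Lipschitz-ratio bound for the perturbed semigroup: let θ ∈ (0,1), let A : X → ℝ be a normalized potential which is Lipschitz with constant C_A, let V : X → ℝ be Lipschitz with constant C_V, and let f ∈ C(X,ℝ) be nonnegative and satisfy f(x) ≤ e^{C_f·d_θ(x,y)}·f(y) for all x, y ∈ X, where C_f ≥ 0. Then for every T ≥ 0 and all x, y ∈ X: e^{T(𝓛_A − I + M_V)}(f)(x) ≤ exp( [ (C_A·θ + T·C_V)/(1 − θ) + C_f ]·d_θ(x,y) ) · e^{T(𝓛_A − I + M_V)}(f)(y). -/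
/-!
For `r : ℝ`, call a nonnegative function `g` an `r`-ratio function when
`g x ≤ exp (r * d_θ(x, y)) * g y` for all `x`, `y` (`RatioBound`). Since `d_θ(ax, ay) = θ d_θ(x, y)`,
the Ruelle operator maps `r`-ratio functions to `θ (C_A + r)`-ratio functions, and
`θ (C_A + r) ≤ r` as soon as `r ≥ C_A θ / (1 - θ)`. Hence for such `r` and small `h ≥ 0`, the Euler
step `1 + h (𝓛_A - I + M_V) = M_{1 - h + h V} + h 𝓛_A` maps `r`-ratio functions to
`(r + δ)`-ratio functions, with `δ = h C_V / (1 - h (1 + sup |V|))` (`RatioBound.euler_step`).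

The exponential is the limit of Euler schemes, `(1 + n⁻¹ B) ^ n f → e^B f`
(`tendsto_euler_opExp`, by dominated convergence in the binomial expansion). With `h = T / n`,
starting at `r = C_A θ / (1 - θ) + C_f`, the accumulated error `n δ` tends to `T C_V`, which is at
most `T C_V / (1 - θ)`.
-/


open MeasureTheory Filter

noncomputable section

open Topology

/-- `g` is nonnegative and its ratios satisfy `g x ≤ exp (r * d_θ(x, y)) * g y`. -/
def RatioBound {d : ℕ} (θ r : ℝ) (g : (ℕ → Fin d) → ℝ) : Prop :=
  (∀ z, 0 ≤ g z) ∧ ∀ x y, g x ≤ Real.exp (r * distTheta θ x y) * g y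

lemma distTheta_nonneg {d : ℕ} {θ : ℝ} (hθ0 : 0 < θ) (x y : ℕ → Fin d) :
    0 ≤ distTheta θ x y := by
  unfold distTheta
  split_ifs <;> positivity

lemma distTheta_le_one {d : ℕ} {θ : ℝ} (hθ0 : 0 < θ) (hθ1 : θ < 1) (x y : ℕ → Fin d) :
    distTheta θ x y ≤ 1 := by
  unfold distTheta
  split_ifs
  · exact zero_le_one
  · exact pow_le_one₀ hθ0.le hθ1.le

lemma distTheta_cons {d : ℕ} (θ : ℝ) (a : Fin d) (x y : ℕ → Fin d) :
    distTheta θ (cons a x) (cons a y) = θ * distTheta θ x y := by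
  have hinj : cons a x = cons a y ↔ x = y :=
    ⟨fun h => funext fun n => congrFun h (n + 1), fun h => by rw [h]⟩
  unfold distTheta
  by_cases h : x = y
  · simp [h]
  · rw [if_neg h, if_neg (fun h' => h (hinj.1 h')), ← pow_succ']
    congr 1
    have hne : {n | cons a x n ≠ cons a y n}.Nonempty := by
      obtain ⟨n, hn⟩ := Function.ne_iff.1 (fun h' => h (hinj.1 h'))
      exact ⟨n, hn⟩
    have hpos : 1 ≤ sInf {n | cons a x n ≠ cons a y n} := by
      by_contra h0
      have h1 := Nat.sInf_mem hne
      rw [show sInf {n | cons a x n ≠ cons a y n} = 0 by omega] at h1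
      exact h1 rfl
    exact (Nat.sInf_add hpos).symm

/-- A constant for which a function on `X` is `d_θ`-Lipschitz is nonnegative, because `X` has two distinct
points. -/
lemma lipConst_nonneg {d : ℕ} (hd : 2 ≤ d) {θ : ℝ} (hθ0 : 0 < θ) {g : (ℕ → Fin d) → ℝ} {C : ℝ}
    (h : ∀ x y, |g x - g y| ≤ C * distTheta θ x y) : 0 ≤ C := by
  have hne : (fun _ : ℕ => (⟨0, by omega⟩ : Fin d)) ≠ fun _ => ⟨1, by omega⟩ := by
    intro h0
    simpa using congrFun h0 0
  have h1 := (abs_nonneg _).trans (h _ _ : |g (fun _ => ⟨0, by omega⟩) - g (fun _ => ⟨1, by omega⟩)|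
    ≤ _)
  rw [distTheta, if_neg hne] at h1
  exact nonneg_of_mul_nonneg_left h1 (by positivity)

lemma RatioBound.mono {d : ℕ} {θ r s : ℝ} (hθ0 : 0 < θ) (hrs : r ≤ s) {g : (ℕ → Fin d) → ℝ}
    (hg : RatioBound θ r g) : RatioBound θ s g := by
  refine ⟨hg.1, fun x y => (hg.2 x y).trans ?_⟩
  have := hg.1 y
  have := distTheta_nonneg hθ0 x y
  gcongr

/-- The Ruelle operator preserves `r`-ratio functions once `θ (C_A + r) ≤ r`. -/
lemma RatioBound.ruelleSum {d : ℕ} {θ r CA : ℝ} (hθ0 : 0 < θ) {A g : (ℕ → Fin d) → ℝ}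
    (hALip : ∀ x y, |A x - A y| ≤ CA * distTheta θ x y) (hr : θ * (CA + r) ≤ r)
    (hg : RatioBound θ r g) : RatioBound θ r (ruelleSum A g) := by
  refine ⟨fun z => Finset.sum_nonneg fun a _ => mul_nonneg (Real.exp_pos _).le (hg.1 _),
    fun x y => ?_⟩
  unfold _root_.ruelleSum
  rw [Finset.mul_sum]
  refine Finset.sum_le_sum fun a _ => ?_
  have h1 := (abs_le.1 (hALip (cons a x) (cons a y))).2
  have h2 := hg.2 (cons a x) (cons a y)
  rw [distTheta_cons] at h1 h2
  have h3 := mul_le_mul_of_nonneg_right hr (distTheta_nonneg hθ0 x y)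
  have h4 := hg.1 (cons a y)
  calc Real.exp (A (cons a x)) * g (cons a x)
      ≤ Real.exp (A (cons a x)) *
          (Real.exp (r * (θ * distTheta θ x y)) * g (cons a y)) := by gcongr
    _ = Real.exp (A (cons a x) + r * (θ * distTheta θ x y)) * g (cons a y) := by
        rw [Real.exp_add]; ring
    _ ≤ Real.exp (r * distTheta θ x y + A (cons a y)) * g (cons a y) := by
        refine mul_le_mul_of_nonneg_right (Real.exp_le_exp.2 ?_) h4
        linarith
    _ = _ := by rw [Real.exp_add]; ring

/-- One Euler step for the generator `𝓛_A - I + M_V` worsens the ratio exponent by at most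
`δ = h C_V / (1 - h (1 + M))`, where `M` bounds `-V`. -/
lemma RatioBound.euler_step {d : ℕ} {θ r CA CV M h : ℝ} (hθ0 : 0 < θ)
    {A V g : (ℕ → Fin d) → ℝ}
    (hALip : ∀ x y, |A x - A y| ≤ CA * distTheta θ x y) (hr : θ * (CA + r) ≤ r)
    (hCV : 0 ≤ CV) (hVLip : ∀ x y, |V x - V y| ≤ CV * distTheta θ x y)
    (hM : ∀ x, -M ≤ V x) (hh : 0 ≤ h) (hhM : h * (1 + M) < 1) (hg : RatioBound θ r g) :
    RatioBound θ (r + h * CV / (1 - h * (1 + M)))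
      (fun x => (1 - h + h * V x) * g x + h * _root_.ruelleSum A g x) := by
  set m := 1 - h * (1 + M) with hm
  have hm0 : 0 < m := by linarith
  have hδ : 0 ≤ h * CV / m := by positivity
  have hW : ∀ x, m ≤ 1 - h + h * V x := fun x => by
    have := mul_le_mul_of_nonneg_left (hM x) hh
    linarith
  have hL := (hg.ruelleSum hθ0 hALip hr).mono (s := r + h * CV / m) hθ0 (by linarith)
  refine ⟨fun z => add_nonneg (mul_nonneg (hm0.le.trans (hW z)) (hg.1 z))
    (mul_nonneg hh (hL.1 z)), fun x y => ?_⟩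
  have hD := distTheta_nonneg hθ0 x y
  have hWxy : 1 - h + h * V x
      ≤ Real.exp (h * CV / m * distTheta θ x y) * (1 - h + h * V y) := by
    have h1 := mul_le_mul_of_nonneg_left (abs_le.1 (hVLip x y)).2 hh
    have h2 := Real.add_one_le_exp (h * CV / m * distTheta θ x y)
    have h3 : h * CV / m * distTheta θ x y * m = h * (CV * distTheta θ x y) := by
      field_simp
    have h4 := mul_le_mul_of_nonneg_left (hW y) (mul_nonneg hδ hD)
    have h5 := mul_le_mul_of_nonneg_right h2 (hm0.le.trans (hW y))
    linarith
  have hWg : (1 - h + h * V x) * g x ≤ Real.exp ((r + h * CV / m) * distTheta θ x y) *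
      ((1 - h + h * V y) * g y) := by
    calc (1 - h + h * V x) * g x
        ≤ (Real.exp (h * CV / m * distTheta θ x y) * (1 - h + h * V y)) *
            (Real.exp (r * distTheta θ x y) * g y) :=
          mul_le_mul hWxy (hg.2 x y) (hg.1 x)
            (mul_nonneg (Real.exp_pos _).le (hm0.le.trans (hW y)))
      _ = _ := by rw [add_mul, Real.exp_add]; ring
  have hLxy := mul_le_mul_of_nonneg_left (hL.2 x y) hh
  linarith

/-- The Euler scheme `(1 + n⁻¹ B) ^ n f` converges to `e^B f`: the coefficient `choose n k / n ^ k`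
of `B ^ k f` tends to `1 / k!` and is bounded by it. -/
lemma tendsto_euler_opExp {X : Type*} [TopologicalSpace X] [CompactSpace X]
    (B : C(X, ℝ) →L[ℝ] C(X, ℝ)) (f : C(X, ℝ)) :
    Tendsto (fun n : ℕ => ((1 + (n : ℝ)⁻¹ • B) ^ n) f) atTop (𝓝 (opExp B f)) := by
  have hpow : ∀ (c : ℝ) (k : ℕ), (c • B) ^ k = c ^ k • B ^ k := by
    intro c k
    induction k with
    | zero => simp
    | succ k ih =>
      ext1 g
      rw [pow_succ, ih, pow_succ, pow_succ]
      simp [smul_smul, mul_comm]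
  have hexp : ∀ n : ℕ, ((1 + (n : ℝ)⁻¹ • B) ^ n) f
      = ∑' k : ℕ, ((n.choose k : ℝ) * ((n : ℝ)⁻¹) ^ k) • (B ^ k) f := by
    intro n
    rw [add_comm, (Commute.one_right _).add_pow, tsum_eq_sum (s := Finset.range (n + 1))]
    · rw [sum_apply]
      refine Finset.sum_congr rfl fun k _ => ?_
      rw [one_pow, mul_one, hpow, ← nsmul_eq_mul', ← Nat.cast_smul_eq_nsmul ℝ, smul_smul]
      rfl
    · intro k hk
      rw [Nat.choose_eq_zero_of_lt (by simpa using hk)]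
      simp
  simp_rw [hexp]
  refine tendsto_tsum_of_dominated_convergence
    (bound := fun k => ‖B‖ ^ k / (Nat.factorial k : ℝ) * ‖f‖)
    ((Real.summable_pow_div_factorial ‖B‖).mul_right _) (fun k => ?_) ?_
  · refine Tendsto.smul_const ?_ _
    have h := ProbabilityTheory.tendsto_choose_mul_pow_atTop (p := fun n : ℕ => (n : ℝ)⁻¹)
      (r := 1) k ?_
    · simpa using h
    · refine tendsto_const_nhds.congr' ?_
      filter_upwards [eventually_ne_atTop 0] with n hn
      field_simp
  · filter_upwards [eventually_ne_atTop 0] with n hn k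
    rw [norm_smul, Real.norm_of_nonneg (by positivity)]
    have h1 : (n.choose k : ℝ) * ((n : ℝ)⁻¹) ^ k ≤ (Nat.factorial k : ℝ)⁻¹ := by
      have h2 := Nat.choose_le_pow_div (α := ℝ) k n
      have h3 : (0 : ℝ) < (n : ℝ) ^ k := by positivity
      rw [inv_pow, ← div_eq_mul_inv, div_le_iff₀ h3]
      rwa [div_eq_inv_mul] at h2
    have h2 : ‖(B ^ k) f‖ ≤ ‖B‖ ^ k * ‖f‖ := by
      clear h1
      induction k with
      | zero => simp
      | succ k ih =>
        rw [pow_succ', pow_succ', mul_assoc]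
        exact (B.le_opNorm _).trans (mul_le_mul_of_nonneg_left ih (norm_nonneg _))
    calc _ ≤ (Nat.factorial k : ℝ)⁻¹ * (‖B‖ ^ k * ‖f‖) := by gcongr
      _ = _ := by rw [div_eq_inv_mul]; ring

/-- **Lipschitz-ratio bound for the perturbed semigroup.** -/
theorem stmt_5 (d : ℕ) (hd : 2 ≤ d) (θ : ℝ) (hθ0 : 0 < θ) (hθ1 : θ < 1)
    (A V : (ℕ → Fin d) → ℝ)
    (CA : ℝ) (hALip : ∀ x y, |A x - A y| ≤ CA * distTheta θ x y)
    (hAnorm : ∀ x, ∑ a : Fin d, Real.exp (A (cons a x)) = 1)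
    (CV : ℝ) (hVLip : ∀ x y, |V x - V y| ≤ CV * distTheta θ x y)
    (LA MV : C((ℕ → Fin d), ℝ) →L[ℝ] C((ℕ → Fin d), ℝ))
    (hLA : ∀ (f : C((ℕ → Fin d), ℝ)) (x), LA f x = ∑ a : Fin d, Real.exp (A (cons a x)) * f (cons a x))
    (hMV : ∀ (f : C((ℕ → Fin d), ℝ)) (x), MV f x = V x * f x)
    (f : C((ℕ → Fin d), ℝ)) (hf0 : ∀ z, 0 ≤ f z)
    (Cf : ℝ) (hCf : 0 ≤ Cf)
    (hf : ∀ x y, f x ≤ Real.exp (Cf * distTheta θ x y) * f y)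
    (T : ℝ) (hT : 0 ≤ T) (x y : ℕ → Fin d) :
    opExp (T • (LA - ContinuousLinearMap.id ℝ C((ℕ → Fin d), ℝ) + MV)) f x
      ≤ Real.exp (((CA * θ + T * CV) / (1 - θ) + Cf) * distTheta θ x y) *
          opExp (T • (LA - ContinuousLinearMap.id ℝ C((ℕ → Fin d), ℝ) + MV)) f y := by
  have hCA := lipConst_nonneg hd hθ0 hALip
  have hCV := lipConst_nonneg hd hθ0 hVLip
  have h1θ : 0 < 1 - θ := by linarith
  set B := LA - ContinuousLinearMap.id ℝ C((ℕ → Fin d), ℝ) + MV with hB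
  set M := |V x| + CV with hM
  set r₀ := CA * θ / (1 - θ) + Cf with hr₀
  have hVM : ∀ z, -M ≤ V z := fun z => by
    have h1 := (abs_le.1 (hVLip x z)).2
    have h2 := mul_le_mul_of_nonneg_left (distTheta_le_one hθ0 hθ1 x z) hCV
    have h3 := neg_abs_le (V x)
    linarith
  -- `CA * θ / (1 - θ)` is the fixed point of `r ↦ θ * (CA + r)`.
  have hinv : ∀ r, r₀ ≤ r → θ * (CA + r) ≤ r := fun r hr => by
    have h1 : CA * θ / (1 - θ) ≤ r := by linarith
    rw [div_le_iff₀ h1θ] at h1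
    linarith
  have hstart : RatioBound θ r₀ f :=
    RatioBound.mono (r := Cf) hθ0 (by rw [hr₀]; linarith [show 0 ≤ CA * θ / (1 - θ) by positivity])
      ⟨hf0, hf⟩
  have hiter : ∀ h : ℝ, 0 ≤ h → h * (1 + M) < 1 → ∀ k : ℕ,
      RatioBound θ (r₀ + k * (h * CV / (1 - h * (1 + M)))) (((1 + h • B) ^ k) f) := by
    intro h hh hhM k
    have hδ : 0 ≤ h * CV / (1 - h * (1 + M)) :=
      div_nonneg (mul_nonneg hh hCV) (by linarith)
    induction k with
    | zero => simpa using hstart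
    | succ k ih =>
      have hs := ih.euler_step hθ0 hALip
        (hinv _ (by linarith [mul_nonneg (Nat.cast_nonneg (α := ℝ) k) hδ])) hCV hVLip hVM hh hhM
      convert! hs using 1
      · push_cast
        ring
      · funext z
        rw [pow_succ']
        simp [hB, hLA, hMV, ruelleSum]
        ring
  have hlim := tendsto_euler_opExp (T • B) f
  have hpt : ∀ z, Tendsto (fun n : ℕ => ((1 + (n : ℝ)⁻¹ • T • B) ^ n) f z) atTop
      (𝓝 (opExp (T • B) f z)) := fun z =>
    ((continuous_eval_const z).tendsto _).comp hlim
  have hdiv : Tendsto (fun n : ℕ => (n : ℝ)⁻¹ * T * (1 + M)) atTop (𝓝 0) := by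
    simpa using ((tendsto_inv_atTop_nhds_zero_nat (𝕜 := ℝ)).mul_const T).mul_const (1 + M)
  have hexpo : Tendsto (fun n : ℕ => r₀ + T * CV / (1 - (n : ℝ)⁻¹ * T * (1 + M))) atTop
      (𝓝 (r₀ + T * CV)) := by
    have h1 := (tendsto_const_nhds (x := T * CV)).div
      ((tendsto_const_nhds (x := (1 : ℝ))).sub hdiv) (by norm_num)
    simpa using h1.const_add r₀
  have hkey : opExp (T • B) f x
      ≤ Real.exp ((r₀ + T * CV) * distTheta θ x y) * opExp (T • B) f y := by
    refine le_of_tendsto_of_tendsto (hpt x)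
      (((Real.continuous_exp.tendsto _).comp (hexpo.mul_const _)).mul (hpt y)) ?_
    filter_upwards [hdiv.eventually_lt_const zero_lt_one, eventually_ne_atTop 0] with n hn hn0
    have h1 := (hiter ((n : ℝ)⁻¹ * T) (by positivity) hn n).2 x y
    have h2 : (n : ℝ) * ((n : ℝ)⁻¹ * T * CV / (1 - (n : ℝ)⁻¹ * T * (1 + M)))
        = T * CV / (1 - (n : ℝ)⁻¹ * T * (1 + M)) := by
      rw [← mul_div_assoc, ← mul_assoc, ← mul_assoc, mul_inv_cancel₀ (by exact_mod_cast hn0),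
        one_mul]
    rw [h2] at h1
    simpa [smul_smul] using h1
  have hpos : 0 ≤ opExp (T • B) f y := by
    refine ge_of_tendsto (hpt y) ?_
    filter_upwards [hdiv.eventually_lt_const zero_lt_one] with n hn
    have h1 := (hiter ((n : ℝ)⁻¹ * T) (by positivity) hn n).1 y
    simpa [smul_smul] using h1
  refine hkey.trans ?_
  have hD := distTheta_nonneg hθ0 x y
  have hle : T * CV ≤ T * CV / (1 - θ) := le_div_self (by positivity) h1θ (by linarith)
  refine mul_le_mul_of_nonneg_right
    (Real.exp_le_exp.2 (mul_le_mul_of_nonneg_right ?_ hD)) hpos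
  rw [hr₀, add_div]
  linarith
end
end

section
/- Structure of the generator of the continuous time Gibbs state: let A : X → ℝ be normalized continuous, V : X → ℝ continuous, λ ∈ ℝ, and F ∈ C(X,ℝ) with F(x) > 0 for all x and 𝓛_A F = (1 − V + λ)·F pointwise (so γ_V := 1 − V + λ is strictly positive). Define B_V(y) := A(y) + log F(y) − log F(σ(y)) − log γ_V(σ(y)). Then: (i) B_V is normalized, i.e. Σ_{a=1}^d e^{B_V(ax)} = 1 for every x ∈ X; (ii) for every f ∈ C(X,ℝ) and every x ∈ X, (1/F(x))·( 𝓛_A(F·f)(x) − F(x)·f(x) + V(x)·F(x)·f(x) ) − λ·f(x) = γ_V(x)·Σ_{a=1}^d e^{B_V(ax)}·( f(ax) − f(x) ); equivalently, the bounded operator L^V on C(X,ℝ) defined by L^V f(x) = γ_V(x)·Σ_{a=1}^d e^{B_V(ax)}( f(ax) − f(x) ) satisfies L^V = M_{1/F}∘(𝓛_A − I + M_V − λ·I)∘M_F. -/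
/-!
Evaluating the eigenvalue equation `𝓛_A F = γ F`, with `γ = 1 - V + λ`, at a point shows `γ > 0`,
because the left side is a nonempty sum of positive terms and `F > 0`. Hence the logarithms in `B_V`
are genuine, and since `σ(ax) = x`,
`e^{B_V(ax)} = e^{A(ax)} F(ax) / (F(x) γ(x))`.
Summing over `a` and using the eigenvalue equation gives the normalization. Multiplying by
`γ(x) (f(ax) - f(x))` and summing gives `𝓛_A(F f)(x) / F(x) - γ(x) f(x)`, the left side of the
generator identity.
-/

open MeasureTheory Filter

noncomputable section

/-- **Structure of the generator of the continuous time Gibbs state.** -/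
theorem stmt_6 (d : ℕ) (hd : 2 ≤ d)
    (A V : (ℕ → Fin d) → ℝ) (hA : Continuous A) (hV : Continuous V)
    (hAnorm : ∀ x, ∑ a : Fin d, Real.exp (A (cons a x)) = 1)
    (lam : ℝ) (F : C((ℕ → Fin d), ℝ)) (hF : ∀ x, 0 < F x)
    (heig : ∀ x, ruelleSum A F x = (1 - V x + lam) * F x) :
    -- (i) `B_V` is normalized
    (∀ x, ∑ a : Fin d, Real.exp
        (A (cons a x) + Real.log (F (cons a x)) - Real.log (F (shift (cons a x)))
          - Real.log (1 - V (shift (cons a x)) + lam)) = 1) ∧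
    -- (ii) the generator identity `L^V = M_{1/F} ∘ (𝓛_A − I + M_V − λ·I) ∘ M_F`
    (∀ (f : C((ℕ → Fin d), ℝ)) (x),
      (F x)⁻¹ * ((∑ a : Fin d, Real.exp (A (cons a x)) * (F (cons a x) * f (cons a x)))
          - F x * f x + V x * (F x * f x)) - lam * f x
        = (1 - V x + lam) * ∑ a : Fin d, Real.exp
            (A (cons a x) + Real.log (F (cons a x)) - Real.log (F (shift (cons a x)))
              - Real.log (1 - V (shift (cons a x)) + lam)) * (f (cons a x) - f x)) := by
  have hshift : ∀ (a : Fin d) (x : ℕ → Fin d), shift (cons a x) = x := fun _ _ => rfl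
  have hγ : ∀ x, 0 < 1 - V x + lam := by
    intro x
    have hpos : 0 < ruelleSum A F x :=
      Finset.sum_pos (fun a _ => mul_pos (Real.exp_pos _) (hF _))
        ⟨⟨0, by omega⟩, Finset.mem_univ _⟩
    rw [heig x] at hpos
    exact pos_of_mul_pos_left hpos (hF x).le
  have hexp : ∀ (a : Fin d) (x : ℕ → Fin d), Real.exp
      (A (cons a x) + Real.log (F (cons a x)) - Real.log (F x) - Real.log (1 - V x + lam))
        = Real.exp (A (cons a x)) * F (cons a x) / F x / (1 - V x + lam) := by
    intro a x
    rw [Real.exp_sub, Real.exp_sub, Real.exp_add, Real.exp_log (hF _), Real.exp_log (hF _),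
      Real.exp_log (hγ x)]
  have hsum : ∀ x, ∑ a : Fin d, Real.exp (A (cons a x)) * F (cons a x)
      = (1 - V x + lam) * F x := heig
  simp only [hshift, hexp]
  refine ⟨fun x => ?_, fun f x => ?_⟩
  · have h1 := (hF x).ne'
    have h2 := (hγ x).ne'
    rw [← Finset.sum_div, ← Finset.sum_div, hsum]
    field_simp
  · have h1 := (hF x).ne'
    have h2 := (hγ x).ne'
    have hsplit : ∑ a : Fin d, Real.exp (A (cons a x)) * F (cons a x) / F x / (1 - V x + lam)
          * (f (cons a x) - f x)
        = ((∑ a : Fin d, Real.exp (A (cons a x)) * (F (cons a x) * f (cons a x)))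
          - (1 - V x + lam) * F x * f x) / F x / (1 - V x + lam) := by
      rw [← hsum, Finset.sum_mul, ← Finset.sum_sub_distrib, Finset.sum_div, Finset.sum_div]
      exact Finset.sum_congr rfl fun a _ => by ring
    rw [hsplit, mul_div_cancel₀ _ h2]
    field_simp
    ring
end
end

section
/- The normalized quotient of the stationary measure by the eigenfunction is an eigenprobability: let A : X → ℝ be normalized continuous, V continuous, λ ∈ ℝ, F ∈ C(X,ℝ) with F > 0 and 𝓛_A F = (1 − V + λ)·F pointwise; set γ_V := 1 − V + λ and B_V := A + log F − log F∘σ − log γ_V∘σ. Let μ_{B_V} be a Borel probability with ∫𝓛_{B_V} g dμ_{B_V} = ∫g dμ_{B_V} for all g ∈ C(X,ℝ), let μ_{B_V,γ_V} be the probability with density (1/γ_V)/∫(1/γ_V)dμ_{B_V} with respect to μ_{B_V}, and let ν̃ be the probability with density (1/F)/∫(1/F)dμ_{B_V,γ_V} with respect to μ_{B_V,γ_V}. Then for every g ∈ C(X,ℝ): ∫ (𝓛_A g − g + V·g) dν̃ = λ·∫ g dν̃. -/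
/-!
Write `γ = γ_V`. Since `F > 0` and `𝓛_A F = γ F`, also `γ > 0`, so the logarithms in `B_V` are
genuine and `e^{B_V(ax)} = e^{A(ax)} F(ax) / (F(x) γ(x))`. Hence `𝓛_{B_V} (g / F) = 𝓛_A g / (F γ)`
(`ruelleSum_BV_div`). Up to a constant factor, `ν̃` has density `1 / (F γ)` with respect to
`μ_{B_V}`, so `∫ (𝓛_A g - γ g) dν̃` is a multiple of `∫ (𝓛_{B_V} (g / F) - g / F) dμ_{B_V}`, which
vanishes by stationarity. The claim follows from `𝓛_A g - g + V g = (𝓛_A g - γ g) + λ g`.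
-/

open MeasureTheory Filter

noncomputable section

/-- `γ_V = 1 - V + λ`. -/
def gammaV {d : ℕ} (V : (ℕ → Fin d) → ℝ) (lam : ℝ) (x : ℕ → Fin d) : ℝ := 1 - V x + lam

/-- `B_V = A + log F - log F∘σ - log γ_V∘σ`. -/
def BV {d : ℕ} (A V : (ℕ → Fin d) → ℝ) (lam : ℝ) (F : (ℕ → Fin d) → ℝ)
    (y : ℕ → Fin d) : ℝ :=
  A y + Real.log (F y) - Real.log (F (shift y)) - Real.log (gammaV V lam (shift y))

lemma continuous_cons {d : ℕ} (a : Fin d) : Continuous (cons a) := by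
  refine continuous_pi fun n => ?_
  cases n with
  | zero => exact continuous_const
  | succ n => exact continuous_apply n

lemma continuous_ruelleSum {d : ℕ} {B g : (ℕ → Fin d) → ℝ} (hB : Continuous B)
    (hg : Continuous g) : Continuous (ruelleSum B g) := by
  unfold ruelleSum
  exact continuous_finsetSum _ fun a _ =>
    (Real.continuous_exp.comp (hB.comp (continuous_cons a))).mul (hg.comp (continuous_cons a))

lemma gammaV_pos {d : ℕ} (hd : 2 ≤ d) {A V F : (ℕ → Fin d) → ℝ} {lam : ℝ}
    (hFpos : ∀ x, 0 < F x) (heig : ∀ x, ruelleSum A F x = (1 - V x + lam) * F x)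
    (x : ℕ → Fin d) : 0 < gammaV V lam x := by
  have hsum : 0 < ruelleSum A F x :=
    Finset.sum_pos (fun a _ => mul_pos (Real.exp_pos _) (hFpos _)) ⟨⟨0, by lia⟩, Finset.mem_univ _⟩
  rw [heig] at hsum
  exact pos_of_mul_pos_left hsum (hFpos x).le

/-- The operator with potential `B_V` is the conjugate of `𝓛_A` by multiplication by `F`,
divided by `γ_V`. -/
lemma ruelleSum_BV_div {d : ℕ} {A V F : (ℕ → Fin d) → ℝ} {lam : ℝ}
    (hFpos : ∀ x, 0 < F x) (hγ : ∀ x, 0 < gammaV V lam x) (g : (ℕ → Fin d) → ℝ)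
    (x : ℕ → Fin d) :
    ruelleSum (BV A V lam F) (fun y => g y / F y) x
      = ruelleSum A g x / F x / gammaV V lam x := by
  unfold ruelleSum
  rw [Finset.sum_div, Finset.sum_div]
  refine Finset.sum_congr rfl fun a _ => ?_
  have hshift : shift (cons a x) = x := rfl
  rw [BV, hshift, Real.exp_sub, Real.exp_sub, Real.exp_add, Real.exp_log (hFpos _),
    Real.exp_log (hFpos _), Real.exp_log (hγ _)]
  have h1 := (hFpos (cons a x)).ne'
  have h2 := (hFpos x).ne'
  have h3 := (hγ x).ne'
  field_simp

/-- **The normalized quotient of the stationary measure by the eigenfunction is an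
eigenprobability.** -/
theorem stmt_10 (d : ℕ) (hd : 2 ≤ d)
    (A V : (ℕ → Fin d) → ℝ) (hA : Continuous A) (hV : Continuous V)
    (hAnorm : ∀ x, ∑ a : Fin d, Real.exp (A (cons a x)) = 1)
    (lam : ℝ) (F : C((ℕ → Fin d), ℝ)) (hFpos : ∀ x, 0 < F x)
    (heig : ∀ x, ruelleSum A F x = (1 - V x + lam) * F x)
    (μB : Measure (ℕ → Fin d)) (hμBp : IsProbabilityMeasure μB)
    (hμBinv : ∀ g : C((ℕ → Fin d), ℝ), ∫ x, ruelleSum (BV A V lam F) g x ∂μB = ∫ x, g x ∂μB)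
    (μ2 : Measure (ℕ → Fin d)) (hμ2p : IsProbabilityMeasure μ2)
    (hμ2 : ∀ g : C((ℕ → Fin d), ℝ),
      ∫ x, g x ∂μ2 = (∫ x, g x / gammaV V lam x ∂μB) / ∫ x, (gammaV V lam x)⁻¹ ∂μB)
    (νt : Measure (ℕ → Fin d)) (hνtp : IsProbabilityMeasure νt)
    (hνt : ∀ g : C((ℕ → Fin d), ℝ),
      ∫ x, g x ∂νt = (∫ x, g x / F x ∂μ2) / ∫ x, (F x)⁻¹ ∂μ2) :
    ∀ g : C((ℕ → Fin d), ℝ),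
      ∫ x, (ruelleSum A g x - g x + V x * g x) ∂νt = lam * ∫ x, g x ∂νt := by
  intro g
  have hγ := gammaV_pos hd hFpos heig
  have hF0 : ∀ x, F x ≠ 0 := fun x => (hFpos x).ne'
  have hγ0 : ∀ x, gammaV V lam x ≠ 0 := fun x => (hγ x).ne'
  have hγc : Continuous (gammaV V lam) := by unfold gammaV; fun_prop
  have hLg : Continuous (ruelleSum A g) := continuous_ruelleSum hA g.continuous
  have integrable_of_cont : ∀ (μ : Measure (ℕ → Fin d)) [IsProbabilityMeasure μ]
      {f : (ℕ → Fin d) → ℝ}, Continuous f → Integrable f μ := fun μ _ f hf =>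
    hf.integrable_of_hasCompactSupport (HasCompactSupport.of_compactSpace f)
  let k : C((ℕ → Fin d), ℝ) :=
    ⟨fun x => ruelleSum A g x - gammaV V lam x * g x, by fun_prop⟩
  let kF : C((ℕ → Fin d), ℝ) := ⟨fun x => k x / F x, by fun_prop (disch := assumption)⟩
  let h : C((ℕ → Fin d), ℝ) := ⟨fun x => g x / F x, by fun_prop (disch := assumption)⟩
  have hquot : ∀ x, kF x / gammaV V lam x = ruelleSum (BV A V lam F) h x - h x := by
    intro x
    have hL := ruelleSum_BV_div (A := A) hFpos hγ g x
    change (ruelleSum A g x - gammaV V lam x * g x) / F x / gammaV V lam x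
      = ruelleSum (BV A V lam F) (fun y => g y / F y) x - g x / F x
    rw [hL]
    have h2 := hF0 x
    have h3 := hγ0 x
    field_simp
  have hLh : Continuous (ruelleSum (BV A V lam F) h) := by
    have heq : ruelleSum (BV A V lam F) h = fun x => ruelleSum A g x / F x / gammaV V lam x :=
      funext (ruelleSum_BV_div hFpos hγ g)
    rw [heq]
    fun_prop (disch := assumption)
  have hB0 : ∫ x, kF x / gammaV V lam x ∂μB = 0 := by
    simp_rw [hquot]
    rw [integral_sub (integrable_of_cont μB hLh) (integrable_of_cont μB h.continuous), hμBinv,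
      sub_self]
  have hk0 : ∫ x, k x ∂νt = 0 := by
    have h2 : ∫ x, k x / F x ∂μ2 = 0 := by
      have := hμ2 kF
      rwa [hB0, zero_div] at this
    rw [hνt, h2, zero_div]
  have hsplit : ∀ x, ruelleSum A g x - g x + V x * g x = k x + lam * g x := by
    intro x
    change _ = (ruelleSum A g x - (1 - V x + lam) * g x) + lam * g x
    ring
  simp_rw [hsplit]
  rw [integral_add (integrable_of_cont νt k.continuous)
    ((integrable_of_cont νt g.continuous).const_mul lam), hk0, zero_add,
    integral_const_mul]
end
end
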